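/- arXiv:1604.03287 — 2 statements merged into one kernel-verified Lean document; each statement's English description precedes it below -/
import Mathlib

section
/- Let Γ'' be a composite of closed Galois structures Γ : (𝒞, ℰ) → (𝒳, ℱ) and Γ' = (F, U, θ, ζ) : (𝒳, ℱ) → (𝒴, 𝒢), with 𝒞 pointed protomodular, (𝒞, ℰ) satisfying (E4), (E5), (M), I preserving pullbacks of type (1), and F protoadditive. Let f : A → B be a Γ-normal extension. Then [f]_{Γ'',1} = [Ker f]_{Γ'',0}, where [f]_{Γ'',1} is the kernel of the domain component of the unit of the reflection of Ext_ℰ(𝒞) onto NExt_{Γ''}(𝒞) at f, and [Ker f]_{Γ'',0} is the kernel of the unit of the composite reflection F ∘ I at Ker f. Consequently, the restriction of the radical [−]_{Γ'',1} to the category NExt_Γ(𝒞) of Γ-normal extensions is protoadditive, and hence the reflector F₁ of NExt_Γ(𝒞) onto NExt_{Γ''}(𝒞) is protoadditive. -/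
open CategoryTheory Limits

universe v u

section Axioms
variable {𝒟 : Type u} [Category.{v} 𝒟]

/-- Axiom (E1): the class contains all isomorphisms. -/
def AxE1 (E : MorphismProperty 𝒟) : Prop := ∀ {X Y : 𝒟} (f : X ⟶ Y), IsIso f → E f

/-- Axiom (E2): pullbacks of morphisms of the class exist and belong to the class. -/
def AxE2 (E : MorphismProperty 𝒟) : Prop :=
  ∀ {X Y Z : 𝒟} (f : X ⟶ Z) (g : Y ⟶ Z), E g →
    ∃ (P : 𝒟) (p₁ : P ⟶ X) (p₂ : P ⟶ Y), IsPullback p₁ p₂ f g ∧ E p₁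

/-- Axiom (E3): the class is closed under composition. -/
def AxE3 (E : MorphismProperty 𝒟) : Prop :=
  ∀ {X Y Z : 𝒟} (f : X ⟶ Y) (g : Y ⟶ Z), E f → E g → E (f ≫ g)

/-- Axiom (E4): if `f ≫ g` is in the class then so is `g`. -/
def AxE4 (E : MorphismProperty 𝒟) : Prop :=
  ∀ {X Y Z : 𝒟} (f : X ⟶ Y) (g : Y ⟶ Z), E (f ≫ g) → E g

/-- Axiom (E5): in a morphism of short exact sequences over a fixed base `A₀`, if the
extension `a` and the induced morphism `k` on kernels lie in the class, then so does the
middle morphism `f`. -/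
def AxE5 [HasZeroMorphisms 𝒟] (E : MorphismProperty 𝒟) : Prop :=
  ∀ {K L A₁ B A₀ : 𝒟} (ka : K ⟶ A₁) (kb : L ⟶ B) (a : A₁ ⟶ A₀) (b : B ⟶ A₀)
    (f : A₁ ⟶ B) (k : K ⟶ L), f ≫ b = a → k ≫ kb = ka ≫ f →
    ∀ (ha : ka ≫ a = 0) (hb : kb ≫ b = 0),
    Nonempty (IsLimit (KernelFork.ofι ka ha)) →
    Nonempty (IsLimit (KernelFork.ofι kb hb)) →
    E a → E k → E f

/-- The split short five lemma in a pointed category. -/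
def SplitShortFive (𝒟 : Type u) [Category.{v} 𝒟] [HasZeroMorphisms 𝒟] : Prop :=
  ∀ {K A B K' A' B' : 𝒟} (k : K ⟶ A) (f : A ⟶ B) (s : B ⟶ A)
    (k' : K' ⟶ A') (f' : A' ⟶ B') (s' : B' ⟶ A')
    (u : K ⟶ K') (v : A ⟶ A') (w : B ⟶ B'),
    s ≫ f = 𝟙 B → s' ≫ f' = 𝟙 B' →
    ∀ (hk : k ≫ f = 0) (hk' : k' ≫ f' = 0),
    Nonempty (IsLimit (KernelFork.ofι k hk)) →
    Nonempty (IsLimit (KernelFork.ofι k' hk')) →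
    u ≫ k' = k ≫ v → v ≫ f' = f ≫ w →
    IsIso u → IsIso w → IsIso v

/-- Pullbacks along split epimorphisms exist. -/
def HasSplitEpiPullbacks (𝒟 : Type u) [Category.{v} 𝒟] : Prop :=
  ∀ {X Y Z : 𝒟} (g : X ⟶ Z) (s : Z ⟶ X), s ≫ g = 𝟙 Z → ∀ h : Y ⟶ Z,
    ∃ (P : 𝒟) (p₁ : P ⟶ X) (p₂ : P ⟶ Y), IsPullback p₁ p₂ g h

/-- A pointed category is protomodular when it has pullbacks along split epimorphisms
and the split short five lemma holds. -/
def ProtomodularCat (𝒟 : Type u) [Category.{v} 𝒟] [HasZeroMorphisms 𝒟] : Prop :=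
  HasSplitEpiPullbacks 𝒟 ∧ SplitShortFive 𝒟

/-- An object of the `E`-slice category `(𝒟 ↓_E B)`: a morphism of `E` with codomain `B`. -/
structure ESliceObj (E : MorphismProperty 𝒟) (B : 𝒟) where
  dom : 𝒟
  hom : dom ⟶ B
  mem : E hom

/-- Morphisms of the `E`-slice category. -/
@[ext] structure ESliceHom {E : MorphismProperty 𝒟} {B : 𝒟} (g h : ESliceObj E B) where
  top : g.dom ⟶ h.dom
  w : top ≫ h.hom = g.hom

instance {E : MorphismProperty 𝒟} {B : 𝒟} : Category (ESliceObj E B) where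
  Hom := ESliceHom
  id g := ⟨𝟙 g.dom, Category.id_comp _⟩
  comp φ ψ := ⟨φ.top ≫ ψ.top, by rw [Category.assoc, ψ.w, φ.w]⟩
  id_comp φ := ESliceHom.ext (Category.id_comp φ.top)
  comp_id φ := ESliceHom.ext (Category.comp_id φ.top)
  assoc φ ψ χ := ESliceHom.ext (Category.assoc φ.top ψ.top χ.top)

/-- A functor `(𝒟 ↓_E B) ⥤ (𝒟 ↓_E A)` realizing base change (pullback) along
`f : A ⟶ B`. -/
structure PullbackFunctorAlong (E : MorphismProperty 𝒟) {A B : 𝒟} (f : A ⟶ B) where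
  R : ESliceObj E B ⥤ ESliceObj E A
  top : ∀ g : ESliceObj E B, (R.obj g).dom ⟶ g.dom
  isPB : ∀ g : ESliceObj E B, IsPullback (top g) (R.obj g).hom g.hom f
  nat : ∀ {g h : ESliceObj E B} (φ : g ⟶ h), (R.map φ).top ≫ top h = top g ≫ φ.top

/-- Axiom (M): every morphism of the class is monadic, i.e. any base-change functor
`f* : (𝒟 ↓_E B) ⥤ (𝒟 ↓_E A)` along a morphism `f` of `E` is a monadic right adjoint. -/
def AxM (E : MorphismProperty 𝒟) : Prop :=
  ∀ {A B : 𝒟} (f : A ⟶ B), E f →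
    ∀ P : PullbackFunctorAlong E f, Nonempty (MonadicRightAdjoint P.R)

/-- An object of the category `Ext_E(𝒟)` of `E`-extensions: a morphism of class `E`. -/
structure ExtObj (E : MorphismProperty 𝒟) where
  dom : 𝒟
  cod : 𝒟
  hom : dom ⟶ cod
  mem : E hom

/-- Morphisms of `Ext_E(𝒟)`: commutative squares. -/
@[ext] structure ExtHom {E : MorphismProperty 𝒟} (a b : ExtObj E) where
  top : a.dom ⟶ b.dom
  bot : a.cod ⟶ b.cod
  w : top ≫ b.hom = a.hom ≫ bot

instance {E : MorphismProperty 𝒟} : Category (ExtObj E) where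
  Hom := ExtHom
  id a := ⟨𝟙 a.dom, 𝟙 a.cod, by simp⟩
  comp φ ψ := ⟨φ.top ≫ ψ.top, φ.bot ≫ ψ.bot, by
    rw [Category.assoc, ψ.w, ← Category.assoc, φ.w, Category.assoc]⟩
  id_comp φ := ExtHom.ext (Category.id_comp φ.top) (Category.id_comp φ.bot)
  comp_id φ := ExtHom.ext (Category.comp_id φ.top) (Category.comp_id φ.bot)
  assoc φ ψ χ := ExtHom.ext (Category.assoc φ.top ψ.top χ.top)
    (Category.assoc φ.bot ψ.bot χ.bot)

instance {E : MorphismProperty 𝒟} [HasZeroMorphisms 𝒟] :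
    HasZeroMorphisms (ExtObj E) where
  zero a b := ⟨⟨0, 0, by simp⟩⟩
  comp_zero φ c := ExtHom.ext (comp_zero) (comp_zero)
  zero_comp a {b c} φ := ExtHom.ext (zero_comp) (zero_comp)

@[simp] lemma ExtHom.comp_top {E : MorphismProperty 𝒟} {a b c : ExtObj E}
    (φ : a ⟶ b) (ψ : b ⟶ c) : (φ ≫ ψ).top = φ.top ≫ ψ.top := rfl

@[simp] lemma ExtHom.comp_bot {E : MorphismProperty 𝒟} {a b c : ExtObj E}
    (φ : a ⟶ b) (ψ : b ⟶ c) : (φ ≫ ψ).bot = φ.bot ≫ ψ.bot := rfl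

@[simp] lemma ExtHom.id_top {E : MorphismProperty 𝒟} (a : ExtObj E) :
    (𝟙 a : a ⟶ a).top = 𝟙 a.dom := rfl

@[simp] lemma ExtHom.id_bot {E : MorphismProperty 𝒟} (a : ExtObj E) :
    (𝟙 a : a ⟶ a).bot = 𝟙 a.cod := rfl

/-- A morphism of `Ext_E(𝒟)` is a double `E`-extension when its two components are in `E`
and the comparison morphism to (any) pullback is in `E`. -/
def IsDoubleExt {E : MorphismProperty 𝒟} {a b : ExtObj E} (φ : a ⟶ b) : Prop :=
  E φ.top ∧ E φ.bot ∧
  ∀ {P : 𝒟} (p₁ : P ⟶ a.cod) (p₂ : P ⟶ b.dom), IsPullback p₁ p₂ φ.bot b.hom →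
    ∀ (l : a.dom ⟶ P), l ≫ p₁ = a.hom → l ≫ p₂ = φ.top → E l

/-- The class of double `E`-extensions, as a morphism property of `Ext_E(𝒟)`. -/
def DoubleExtClass (E : MorphismProperty 𝒟) : MorphismProperty (ExtObj E) :=
  fun _ _ φ => IsDoubleExt φ


/-- A functor preserves pullbacks of type (1): pullbacks of a split epimorphism `g ∈ ℰ`
along a morphism `h ∈ ℰ`. -/
def PreservesType1 (E : MorphismProperty 𝒟) (T : 𝒟 ⥤ 𝒟) : Prop :=
  ∀ {A B D C : 𝒟} (k : A ⟶ B) (l : A ⟶ D) (g : B ⟶ C) (h : D ⟶ C) (s : C ⟶ B),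
    s ≫ g = 𝟙 C → E g → E h → IsPullback k l g h →
    IsPullback (T.map k) (T.map l) (T.map g) (T.map h)

/-- A functor between pointed categories is protoadditive when it preserves split short
exact sequences (equivalently: zero morphisms and kernels of split epimorphisms). -/
structure Protoadditive {𝒟' : Type*} [Category 𝒟'] [HasZeroMorphisms 𝒟]
    [HasZeroMorphisms 𝒟'] (T : 𝒟 ⥤ 𝒟') : Prop where
  map_zero : ∀ (X Y : 𝒟), T.map (0 : X ⟶ Y) = 0
  preserves : ∀ {K A B : 𝒟} (k : K ⟶ A) (f : A ⟶ B) (s : B ⟶ A),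
    s ≫ f = 𝟙 B → ∀ (hk : k ≫ f = 0),
    Nonempty (IsLimit (KernelFork.ofι k hk)) →
    Nonempty (IsLimit (KernelFork.ofι (T.map k)
      (show T.map k ≫ T.map f = 0 by rw [← T.map_comp, hk, map_zero])))

end Axioms

/-- A closed Galois structure `Γ = (𝒞, 𝒳, I, H, η, ε, ℰ, ℱ)`: the replete full reflective
subcategory `𝒳` of `𝒞` is given by the predicate `inX`, the reflector `I` (composed with
the inclusion `H`) with unit `η` and the reflection universal property; the classes of
extensions `ℰ` (in `𝒞`) and `ℱ` (in `𝒳`) satisfy (E1)–(E3), `I(ℰ) ⊆ ℱ`, `H(ℱ) ⊆ ℰ`,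
unit components lie in `ℰ`, and the counit is an isomorphism. -/
structure GaloisStructure (𝒞 : Type u) [Category.{v} 𝒞] where
  inX : 𝒞 → Prop
  inX_iso : ∀ {X Y : 𝒞}, (X ≅ Y) → inX X → inX Y
  I : 𝒞 ⥤ 𝒞
  η : 𝟭 𝒞 ⟶ I
  I_mem : ∀ C : 𝒞, inX (I.obj C)
  refl_univ : ∀ {C D : 𝒞}, inX D → ∀ f : C ⟶ D, ∃! g : I.obj C ⟶ D, η.app C ≫ g = f
  η_iso_of_mem : ∀ {C : 𝒞}, inX C → IsIso (η.app C)
  E : MorphismProperty 𝒞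
  F : MorphismProperty 𝒞
  F_sub_E : ∀ {X Y : 𝒞} (f : X ⟶ Y), F f → E f
  F_in_X : ∀ {X Y : 𝒞} (f : X ⟶ Y), F f → inX X ∧ inX Y
  E1 : AxE1 E
  E2 : AxE2 E
  E3 : AxE3 E
  F1 : ∀ {X Y : 𝒞} (f : X ⟶ Y), inX X → inX Y → IsIso f → F f
  F2 : ∀ {X Y Z : 𝒞} (f : X ⟶ Z) (g : Y ⟶ Z), inX X → F g →
    ∃ (P : 𝒞) (p₁ : P ⟶ X) (p₂ : P ⟶ Y), IsPullback p₁ p₂ f g ∧ F p₁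
  F3 : ∀ {X Y Z : 𝒞} (f : X ⟶ Y) (g : Y ⟶ Z), F f → F g → F (f ≫ g)
  I_map_mem : ∀ {X Y : 𝒞} (f : X ⟶ Y), E f → F (I.map f)
  η_mem : ∀ C : 𝒞, E (η.app C)

namespace GaloisStructure

variable {𝒞 : Type u} [Category.{v} 𝒞] (G : GaloisStructure 𝒞)

/-- An extension is `Γ`-trivial when the naturality square of the unit at it is a
pullback. -/
def Trivial {A B : 𝒞} (f : A ⟶ B) : Prop :=
  IsPullback (G.η.app A) f (G.I.map f) (G.η.app B)

/-- An extension is `Γ`-normal when it lies in `ℰ` and the first projection of its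
kernel pair is `Γ`-trivial (in the presence of axiom (M) every morphism of `ℰ` is
monadic, so this agrees with the usual definition of normal extension). -/
def Normal {A B : 𝒞} (f : A ⟶ B) : Prop :=
  G.E f ∧ ∀ {P : 𝒞} (p₁ p₂ : P ⟶ A), IsPullback p₁ p₂ f f → G.Trivial p₁

end GaloisStructure

/-- Protoadditivity of a functor restricted to the full subcategory determined by a
predicate: split short exact sequences whose objects satisfy the predicate are sent to
split short exact sequences. -/
structure ProtoadditiveOn {𝒞 : Type u} [Category.{v} 𝒞] [HasZeroMorphisms 𝒞]
    (P : 𝒞 → Prop) (T : 𝒞 ⥤ 𝒞) : Prop where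
  map_zero : ∀ (X Y : 𝒞), P X → P Y → T.map (0 : X ⟶ Y) = 0
  preserves : ∀ {K A B : 𝒞} (k : K ⟶ A) (f : A ⟶ B) (s : B ⟶ A),
    P K → P A → P B → s ≫ f = 𝟙 B → ∀ (hk : k ≫ f = 0),
    Nonempty (IsLimit (KernelFork.ofι k hk)) →
    ∃ h0 : T.map k ≫ T.map f = 0,
      Nonempty (IsLimit (KernelFork.ofι (T.map k) h0))

/-- The data of a second closed Galois structure `Γ' = (F, U, θ, ζ) : (𝒳, ℱ) → (𝒴, 𝒢)`
on the reflective subcategory `𝒳` of a Galois structure `Γ` on `𝒞`: the replete full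
reflective subcategory `𝒴 ⊆ 𝒳` is given by `inY`, the reflector `F` (written `Fr`, with
unit `θ`) reflects `𝒳` onto `𝒴`, and the class `𝒢` of extensions of `𝒴` interacts with
`ℱ` as required for a closed Galois structure.  Composing with `Γ` yields the composite
Galois structure `Γ'' : (𝒞, ℰ) → (𝒴, 𝒢)` with reflector `F ∘ I` and unit
`θ_{I(−)} ∘ η`. -/
structure SecondStructure {𝒞 : Type u} [Category.{v} 𝒞] (G : GaloisStructure 𝒞) where
  inY : 𝒞 → Prop
  inY_iso : ∀ {X Y : 𝒞}, (X ≅ Y) → inY X → inY Y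
  Y_sub_X : ∀ C : 𝒞, inY C → G.inX C
  Fr : 𝒞 ⥤ 𝒞
  θ : 𝟭 𝒞 ⟶ Fr
  Fr_mem : ∀ C : 𝒞, G.inX C → inY (Fr.obj C)
  refl_univ : ∀ {C D : 𝒞}, G.inX C → inY D → ∀ f : C ⟶ D,
    ∃! g : Fr.obj C ⟶ D, θ.app C ≫ g = f
  θ_iso_of_mem : ∀ {C : 𝒞}, inY C → IsIso (θ.app C)
  𝒢 : MorphismProperty 𝒞
  𝒢_sub_F : ∀ {X Y : 𝒞} (f : X ⟶ Y), 𝒢 f → G.F f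
  𝒢_in_Y : ∀ {X Y : 𝒞} (f : X ⟶ Y), 𝒢 f → inY X ∧ inY Y
  θ_mem : ∀ C : 𝒞, G.inX C → G.F (θ.app C)
  Fr_map_mem : ∀ {X Y : 𝒞} (f : X ⟶ Y), G.F f → 𝒢 (Fr.map f)
  G1 : ∀ {X Y : 𝒞} (f : X ⟶ Y), inY X → inY Y → IsIso f → 𝒢 f
  G3 : ∀ {X Y Z : 𝒞} (f : X ⟶ Y) (g : Y ⟶ Z), 𝒢 f → 𝒢 g → 𝒢 (f ≫ g)

namespace SecondStructure

variable {𝒞 : Type u} [Category.{v} 𝒞] {G : GaloisStructure 𝒞} (S : SecondStructure G)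

/-- The unit `θ_{I(−)} ∘ η` of the composite reflection `F ∘ I` of `𝒞` onto `𝒴`. -/
def unit (C : 𝒞) : C ⟶ S.Fr.obj (G.I.obj C) := G.η.app C ≫ S.θ.app (G.I.obj C)

/-- `Γ''`-triviality: the naturality square of the unit of the composite reflection is
a pullback. -/
def TrivialComp {A B : 𝒞} (f : A ⟶ B) : Prop :=
  IsPullback (S.unit A) f ((G.I ⋙ S.Fr).map f) (S.unit B)

/-- `Γ''`-normality: the extension lies in `ℰ` and the first projection of its kernel
pair is `Γ''`-trivial. -/
def NormalComp {A B : 𝒞} (f : A ⟶ B) : Prop :=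
  G.E f ∧ ∀ {P : 𝒞} (p₁ p₂ : P ⟶ A), IsPullback p₁ p₂ f f → S.TrivialComp p₁

end SecondStructure

/-- A normalization: a reflection of the category `Ext_ℰ(𝒞)` onto its full subcategory of
extensions satisfying the predicate `N` (e.g. the `Γ`-normal, or `Γ''`-normal,
extensions): a left adjoint `I₁` of the inclusion, given by its unit `η₁` (whose codomain
components are isomorphisms) and the universal property. -/
structure Normalization {𝒞 : Type u} [Category.{v} 𝒞] (E : MorphismProperty 𝒞)
    (N : MorphismProperty 𝒞) where
  I₁ : ExtObj E ⥤ ExtObj E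
  η₁ : 𝟭 (ExtObj E) ⟶ I₁
  mem : ∀ a : ExtObj E, N (I₁.obj a).hom
  refl_univ : ∀ (a b : ExtObj E), N b.hom → ∀ φ : a ⟶ b,
    ∃! ψ : I₁.obj a ⟶ b, η₁.app a ≫ ψ = φ
  η_iso_of_mem : ∀ a : ExtObj E, N a.hom → IsIso (η₁.app a)
  bot_iso : ∀ a : ExtObj E, IsIso (ExtHom.bot (η₁.app a))

/-- The radical `[−]_{Γ',1}` associated with a normalization: the kernel of the domain
component of the unit, with its functorial action. -/
noncomputable def rad1map {𝒞 : Type u} [Category.{v} 𝒞] [HasZeroMorphisms 𝒞]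
    [HasKernels 𝒞] {E N : MorphismProperty 𝒞} (ND : Normalization E N)
    {a b : ExtObj E} (φ : a ⟶ b) :
    kernel ((ND.η₁.app a).top) ⟶ kernel ((ND.η₁.app b).top) :=
  kernel.map _ _ φ.top (ND.I₁.map φ).top (by
    have h := congrArg ExtHom.top (ND.η₁.naturality φ)
    simpa using h.symm)


namespace RadProof

set_option linter.unusedSectionVars false
set_option linter.unusedVariables false
set_option linter.unusedSimpArgs false

variable {𝒞 : Type u} [Category.{v} 𝒞]

section Slice
variable {E : MorphismProperty 𝒞}

@[simp] lemma slice_comp_top {B : 𝒞} {a b c : ESliceObj E B} (φ : a ⟶ b) (ψ : b ⟶ c) :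
    (φ ≫ ψ).top = φ.top ≫ ψ.top := rfl
@[simp] lemma slice_id_top {B : 𝒞} (a : ESliceObj E B) :
    (𝟙 a : a ⟶ a).top = 𝟙 a.dom := rfl

lemma slice_hom_ext {B : 𝒞} {a b : ESliceObj E B} {φ ψ : a ⟶ b} (h : φ.top = ψ.top) : φ = ψ :=
  ESliceHom.ext h

lemma slice_isIso {B : 𝒞} {a b : ESliceObj E B} (φ : a ⟶ b) (h : IsIso φ.top) : IsIso φ :=
  ⟨⟨⟨inv φ.top, by rw [IsIso.inv_comp_eq]; exact φ.w.symm⟩,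
    slice_hom_ext (by simp), slice_hom_ext (by simp)⟩⟩

lemma slice_top_isIso {B : 𝒞} {a b : ESliceObj E B} (φ : a ⟶ b) (h : IsIso φ) : IsIso φ.top :=
  ⟨⟨(inv φ).top, by rw [← slice_comp_top, IsIso.hom_inv_id]; rfl,
    by rw [← slice_comp_top, IsIso.inv_hom_id]; rfl⟩⟩

lemma ext_hom_ext {a b : ExtObj E} {φ ψ : a ⟶ b} (h : φ.top = ψ.top) (h' : φ.bot = ψ.bot) :
    φ = ψ := ExtHom.ext h h'

end Slice

/-- elementary description of kernels -/
structure IsKer [HasZeroMorphisms 𝒞] {K A B : 𝒞} (k : K ⟶ A) (f : A ⟶ B) : Prop where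
  w : k ≫ f = 0
  mono : ∀ {X : 𝒞} (x y : X ⟶ K), x ≫ k = y ≫ k → x = y
  ex : ∀ {X : 𝒞} (x : X ⟶ A), x ≫ f = 0 → ∃ l : X ⟶ K, l ≫ k = x

namespace IsKer
variable [HasZeroMorphisms 𝒞]

lemma lim {K A B : 𝒞} {k : K ⟶ A} {f : A ⟶ B} (h : IsKer k f) (hk : k ≫ f = 0) :
    Nonempty (IsLimit (KernelFork.ofι k hk)) :=
  ⟨KernelFork.IsLimit.ofι k hk (fun x hx => (h.ex x hx).choose)
    (fun x hx => (h.ex x hx).choose_spec)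
    (fun x hx m hm => h.mono _ _ (hm.trans (h.ex x hx).choose_spec.symm))⟩

lemma of_lim {K A B : 𝒞} {k : K ⟶ A} {f : A ⟶ B} (hk : k ≫ f = 0)
    (h : Nonempty (IsLimit (KernelFork.ofι k hk))) : IsKer k f := by
  obtain ⟨h⟩ := h
  refine ⟨hk, fun x y hxy => Fork.IsLimit.hom_ext h hxy, fun x hx => ?_⟩
  exact ⟨(KernelFork.IsLimit.lift' h x hx).1, (KernelFork.IsLimit.lift' h x hx).2⟩

lemma kernel {A B : 𝒞} (f : A ⟶ B) [HasKernel f] : IsKer (kernel.ι f) f :=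
  of_lim (kernel.condition f) ⟨kernelIsKernel f⟩

/-- transfer of a kernel along a pullback square -/
lemma of_pb {K X' X D C : 𝒞} {k : K ⟶ X'} {t : X' ⟶ X} {l : X' ⟶ D} {r : X ⟶ C} {b : D ⟶ C}
    (hk : IsKer k l) (h : IsPullback t l r b) : IsKer (k ≫ t) r := by
  refine ⟨by rw [Category.assoc, h.w, ← Category.assoc, hk.w, zero_comp], ?_, ?_⟩
  · intro Z x y hxy
    apply hk.mono
    apply h.hom_ext
    · simpa using hxy
    · simp [hk.w]
  · intro Z x hx
    obtain ⟨m, hm⟩ := hk.ex (h.lift x 0 (by simp [hx])) (by simp)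
    exact ⟨m, by rw [← Category.assoc, hm]; simp⟩

lemma lift_pb {K X' X D C : 𝒞} {k : K ⟶ X} {t : X' ⟶ X} {l : X' ⟶ D} {r : X ⟶ C} {b : D ⟶ C}
    (hk : IsKer k r) (h : IsPullback t l r b) {k' : K ⟶ X'} (h1 : k' ≫ t = k) (h2 : k' ≫ l = 0) :
    IsKer k' l := by
  refine ⟨h2, ?_, ?_⟩
  · intro Z x y hxy
    apply hk.mono
    rw [← h1, ← Category.assoc, hxy, Category.assoc]
  · intro Z x hx
    obtain ⟨m, hm⟩ := hk.ex (x ≫ t) (by rw [Category.assoc, h.w, ← Category.assoc, hx, zero_comp])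
    refine ⟨m, h.hom_ext ?_ ?_⟩
    · rw [Category.assoc, h1, hm]
    · rw [Category.assoc, h2, hx, comp_zero]

lemma iso_comp {K K' A B : 𝒞} {k : K ⟶ A} {f : A ⟶ B} (h : IsKer k f) (e : K' ⟶ K) [IsIso e] :
    IsKer (e ≫ k) f := by
  refine ⟨by simp [h.w], fun x y hxy => ?_, fun x hx => ?_⟩
  · rw [← cancel_mono e]; exact h.mono _ _ (by simpa using hxy)
  · obtain ⟨l, hl⟩ := h.ex x hx
    exact ⟨l ≫ inv e, by simpa using hl⟩

/-- two kernels of the same map -/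
lemma isIso {K K' A B : 𝒞} {k : K ⟶ A} {k' : K' ⟶ A} {f : A ⟶ B} (h : IsKer k f)
    (h' : IsKer k' f) (u : K ⟶ K') (hu : u ≫ k' = k) : IsIso u := by
  obtain ⟨v, hv⟩ := h.ex k' h'.w
  exact ⟨⟨v, h.mono _ _ (by rw [Category.assoc, hv, hu, Category.id_comp]),
    h'.mono _ _ (by rw [Category.assoc, hu, hv, Category.id_comp])⟩⟩

end IsKer

section Proto
variable [HasZeroMorphisms 𝒞] [HasFiniteLimits 𝒞]

lemma ssf (hpm : ProtomodularCat 𝒞) {K A B K' A' : 𝒞} (k : K ⟶ A) (f : A ⟶ B) (s : B ⟶ A)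
    (k' : K' ⟶ A') (f' : A' ⟶ B) (s' : B ⟶ A') (u : K ⟶ K') (v : A ⟶ A')
    (hs : s ≫ f = 𝟙 B) (hs' : s' ≫ f' = 𝟙 B) (hk : IsKer k f) (hk' : IsKer k' f')
    (h1 : u ≫ k' = k ≫ v) (h2 : v ≫ f' = f) (hu : IsIso u) : IsIso v :=
  hpm.2 k f s k' f' s' u v (𝟙 B) hs hs' hk.w hk'.w (hk.lim _) (hk'.lim _) h1 (by simpa using h2)
    hu inferInstance

lemma pbex {X Y Z : 𝒞} (f : X ⟶ Z) (g : Y ⟶ Z) :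
    ∃ (P : 𝒞) (p₁ : P ⟶ X) (p₂ : P ⟶ Y), IsPullback p₁ p₂ f g :=
  ⟨_, _, _, IsPullback.of_hasPullback f g⟩

/-- a morphism of split epis inducing an iso on kernels is a pullback -/
lemma split_pb (hpm : ProtomodularCat 𝒞) {K X' X D C : 𝒞} {t : X' ⟶ X} {l : X' ⟶ D} {r : X ⟶ C}
    {b : D ⟶ C} (w : t ≫ r = l ≫ b) (s' : D ⟶ X') (hs' : s' ≫ l = 𝟙 D) (s : C ⟶ X)
    (hs : s ≫ r = 𝟙 C) {k : K ⟶ X'} (hk : IsKer k l) (hk' : IsKer (k ≫ t) r) :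
    IsPullback t l r b := by
  obtain ⟨P, p₁, p₂, hp⟩ := pbex r b
  let v : X' ⟶ P := hp.lift t l w
  have hv : IsIso v := by
    refine ssf hpm k l s' (hp.lift (k ≫ t) 0 (by simp [hk'.w])) p₂
      (hp.lift (b ≫ s) (𝟙 _) (by simp [hs])) (𝟙 K) v hs' (by simp) hk
      (hk'.lift_pb hp (by simp) (by simp)) ?_ (by simp [v]) inferInstance
    apply hp.hom_ext <;> simp [v, hk.w]
  exact IsPullback.of_iso hp (asIso v).symm (Iso.refl _) (Iso.refl _) (Iso.refl _)
    (by simp [v]) (by simp [v]) (by simp) (by simp)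

/-- kernel and section are jointly epic -/
lemma joint_epi (hpm : ProtomodularCat 𝒞) {K A B Z : 𝒞} {k : K ⟶ A} {f : A ⟶ B} {s : B ⟶ A}
    (hs : s ≫ f = 𝟙 B) (hk : IsKer k f) (x y : A ⟶ Z) (h1 : k ≫ x = k ≫ y)
    (h2 : s ≫ x = s ≫ y) : x = y := by
  have : IsIso (equalizer.ι x y) := by
    refine ssf hpm (equalizer.lift k h1) (equalizer.ι x y ≫ f) (equalizer.lift s h2)
      k f s (𝟙 K) (equalizer.ι x y) (by simp [hs]) hs ?_ hk (by simp) rfl inferInstance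
    refine ⟨by simp [hk.w], ?_, ?_⟩
    · intro X a b hab
      apply hk.mono
      simpa using congrArg (· ≫ equalizer.ι x y) hab
    · intro X a ha
      obtain ⟨l, hl⟩ := hk.ex (a ≫ equalizer.ι x y) (by simpa using ha)
      exact ⟨l, by ext; simpa using hl⟩
  rw [← cancel_epi (equalizer.ι x y)]
  exact equalizer.condition x y

end Proto

section Monadic
variable [HasZeroMorphisms 𝒞] [HasFiniteLimits 𝒞] (G : GaloisStructure 𝒞)

lemma E_snd {P X Y Z : 𝒞} {p₁ : P ⟶ X} {p₂ : P ⟶ Y} {f : X ⟶ Z} {g : Y ⟶ Z}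
    (h : IsPullback p₁ p₂ f g) (hf : G.E f) : G.E p₂ := by
  obtain ⟨Q, q₁, q₂, hq, hE⟩ := G.E2 g f hf
  have : p₂ = (h.flip.isoIsPullback _ _ hq).hom ≫ q₁ := by simp
  rw [this]
  exact G.E3 _ _ (G.E1 _ inferInstance) hE

lemma E_fst {P X Y Z : 𝒞} {p₁ : P ⟶ X} {p₂ : P ⟶ Y} {f : X ⟶ Z} {g : Y ⟶ Z}
    (h : IsPullback p₁ p₂ f g) (hf : G.E g) : G.E p₁ := E_snd G h.flip hf

lemma E_split (h4 : AxE4 G.E) {X Y : 𝒞} (s : Y ⟶ X) (p : X ⟶ Y) (h : s ≫ p = 𝟙 Y) : G.E p :=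
  h4 s p (by rw [h]; exact G.E1 _ inferInstance)

/-- the base change functor -/
noncomputable def pbF {A B : 𝒞} (f : A ⟶ B) : PullbackFunctorAlong G.E f where
  R :=
    { obj := fun g => ⟨pullback g.hom f, pullback.snd g.hom f,
        E_snd G (IsPullback.of_hasPullback g.hom f) g.mem⟩
      map := fun {g h} φ => ⟨(IsPullback.of_hasPullback h.hom f).lift
        (pullback.fst g.hom f ≫ φ.top) (pullback.snd g.hom f)
        (by rw [Category.assoc, φ.w, pullback.condition]), by simp⟩
      map_id := fun g => by
        apply slice_hom_ext
        apply (IsPullback.of_hasPullback g.hom f).hom_ext <;> simp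
      map_comp := fun {g h k} φ ψ => by
        apply slice_hom_ext
        apply (IsPullback.of_hasPullback k.hom f).hom_ext <;> simp }
  top := fun g => pullback.fst g.hom f
  isPB := fun g => IsPullback.of_hasPullback g.hom f
  nat := fun φ => by simp

/-- base change along an extension reflects isomorphisms -/
lemma cons (hM : AxM G.E) {D C X Y P : 𝒞} {h : D ⟶ C} (hh : G.E h) {x : P ⟶ X} {l : P ⟶ D}
    {gX : X ⟶ C} {gY : Y ⟶ C} (hX : G.E gX) (hY : G.E gY) (v : X ⟶ Y) (hv : v ≫ gY = gX)
    (h1 : IsPullback x l gX h) (h2 : IsPullback (x ≫ v) l gY h) : IsIso v := by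
  let F := pbF G h
  obtain ⟨hmon⟩ := hM h hh F
  let a : ESliceObj G.E C := ⟨X, gX, hX⟩
  let b : ESliceObj G.E C := ⟨Y, gY, hY⟩
  let φ : a ⟶ b := ⟨v, hv⟩
  have : IsIso (F.R.map φ) := by
    apply slice_isIso
    have pa : IsPullback (F.top a) (F.R.obj a).hom gX h := F.isPB a
    have pb : IsPullback (F.top b) (F.R.obj b).hom gY h := F.isPB b
    have e : (F.R.map φ).top = ((pa.isoIsPullback X D h1).hom ≫
        (h2.isoIsPullback Y D pb).hom) := by
      apply pb.hom_ext
      · refine (F.nat φ).trans ?_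
        have u1 : (pa.isoIsPullback X D h1).hom ≫ x = F.top a :=
          IsPullback.isoIsPullback_hom_fst _ _ _ _
        have u2 : (h2.isoIsPullback Y D pb).hom ≫ F.top b = x ≫ v :=
          IsPullback.isoIsPullback_hom_fst _ _ _ _
        refine Eq.trans ?_ (Category.assoc _ _ _).symm
        refine Eq.trans ?_ (congrArg ((pa.isoIsPullback X D h1).hom ≫ ·) u2).symm
        refine Eq.trans ?_ (Category.assoc _ _ _)
        exact congrArg (· ≫ v) u1.symm
      · refine (F.R.map φ).w.trans ?_
        simp only [Category.assoc, IsPullback.isoIsPullback_hom_snd]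
    rw [e]; infer_instance
  have r : F.R.ReflectsIsomorphisms := by
    have : (Monad.comparison (monadicAdjunction F.R) ⋙
      (monadicAdjunction F.R).toMonad.forget).ReflectsIsomorphisms := inferInstance
    exact reflectsIsomorphisms_of_iso (Monad.comparisonForget (monadicAdjunction F.R))
  exact slice_top_isIso φ (isIso_of_reflects_iso φ F.R)

lemma cons_pb (hM : AxM G.E) {D C C' X Y P : 𝒞} {h : D ⟶ C} (hh : G.E h) {x : P ⟶ X}
    {l : P ⟶ D} {gX : X ⟶ C} {gY : Y ⟶ C'} (hX : G.E gX) (hY : G.E gY) {v : X ⟶ Y} {c : C ⟶ C'}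
    (hv : v ≫ gY = gX ≫ c)
    (h1 : IsPullback x l gX h) (h2 : IsPullback (x ≫ v) l gY (h ≫ c)) : IsPullback v gX gY c := by
  obtain ⟨Q, q₁, q₂, hq⟩ := pbex gY c
  let w : X ⟶ Q := hq.lift v gX hv
  have : IsIso w := by
    refine cons G hM hh hX (E_snd G hq hY) w (by simp [w]) h1 ?_
    refine IsPullback.of_right (h₁₂ := q₁) ?_ (by simp [w, h1.w]) hq
    simpa [w] using h2
  exact IsPullback.of_iso hq (asIso w).symm (Iso.refl _) (Iso.refl _) (Iso.refl _)
    (by simp [w]) (by simp [w]) (by simp) (by simp)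

lemma E_epi (h4 : AxE4 G.E) (hM : AxM G.E) {A B : 𝒞} (f : A ⟶ B) (hf : G.E f) : Epi f := by
  refine ⟨fun {Z} x y hxy => ?_⟩
  let l : A ⟶ equalizer x y := equalizer.lift f hxy
  have hl : l ≫ equalizer.ι x y = f := by simp [l]
  have hE : G.E (equalizer.ι x y) := h4 l _ (by rw [hl]; exact hf)
  have : IsIso (equalizer.ι x y) := by
    refine cons G hM hf hE (G.E1 (𝟙 B) inferInstance) (equalizer.ι x y) (by simp)
      (x := l) (l := 𝟙 A) ?_ ?_
    · refine ⟨⟨by simp [hl]⟩, ⟨PullbackCone.IsLimit.mk _ (fun s => s.snd) ?_ ?_ ?_⟩⟩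
      · intro s
        rw [← cancel_mono (equalizer.ι x y), Category.assoc, hl, s.condition]
      · intro s; simp
      · intro s m _ h; simpa using h
    · rw [hl]; exact IsPullback.id_vert f
  rw [← cancel_epi (equalizer.ι x y)]
  exact equalizer.condition x y

/-- descent along an extension -/
lemma descent (hM : AxM G.E) {A B R T T₂ : 𝒞} {f : A ⟶ B} (hf : G.E f) {π₁ π₂ : R ⟶ A}
    (hR : IsPullback π₁ π₂ f f) (t : T ⟶ A) (ht : G.E t) (t₂ : T₂ ⟶ R) (d₁ d₂ : T₂ ⟶ T)
    (h2 : IsPullback d₂ t₂ t π₂) (ht₂ : G.E (t₂ ≫ π₁ ≫ f)) (h1 : d₁ ≫ t = t₂ ≫ π₁)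
    (hu : ∀ {X : 𝒞} (z : X ⟶ T₂), z ≫ t₂ ≫ π₁ = z ≫ t₂ ≫ π₂ → z ≫ d₁ = z ≫ d₂)
    (ha : ∀ {X : 𝒞} (z₁ z₂ y : X ⟶ T₂), z₁ ≫ d₂ = y ≫ d₁ → z₂ ≫ d₂ = y ≫ d₂ →
      z₁ ≫ t₂ ≫ π₁ = z₂ ≫ t₂ ≫ π₁ → z₁ ≫ d₁ = z₂ ≫ d₁) :
    ∃ (Q : 𝒞) (q : Q ⟶ B) (c : T ⟶ Q), G.E q ∧ IsPullback c t q f ∧ d₁ ≫ c = d₂ ≫ c ∧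
      ∀ {Z : 𝒞} (z : Z ⟶ B) (m : T ⟶ Z), G.E z → m ≫ z = t ≫ f → d₁ ≫ m = d₂ ≫ m →
        ∃ n : Q ⟶ Z, c ≫ n = m ∧ n ≫ z = q := by
  let F := pbF G f
  obtain ⟨hmon⟩ := hM f hf F
  have h2w : d₂ ≫ t = t₂ ≫ π₂ := h2.w
  let b : ESliceObj G.E B := ⟨T, t ≫ f, G.E3 _ _ ht hf⟩
  let a : ESliceObj G.E B := ⟨T₂, t₂ ≫ π₁ ≫ f, ht₂⟩
  let z : ESliceObj G.E A := ⟨T, t, ht⟩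
  let D₁ : a ⟶ b := ⟨d₁, by simp [a, b, reassoc_of% h1]⟩
  let D₂ : a ⟶ b := ⟨d₂, by simp [a, b, reassoc_of% h2w, hR.w]⟩
  have pa := F.isPB a
  have pb := F.isPB b
  -- (a, x) ↦ y
  let r : (F.R.obj b).dom ⟶ R := hR.lift (F.R.obj b).hom (F.top b ≫ t)
    (by simpa [b] using pb.w.symm)
  let e : (F.R.obj b).dom ⟶ T₂ := h2.lift (F.top b) r (by simp [r])
  have e1 : e ≫ d₂ = F.top b := by simp [e]
  have e2 : e ≫ t₂ ≫ π₁ = (F.R.obj b).hom := by simp [e, r]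
  let π : F.R.obj b ⟶ z := ⟨e ≫ d₁, by simp [z, h1, e2]⟩
  let s : z ⟶ F.R.obj b := ⟨pb.lift (𝟙 T) t (Category.id_comp _), pb.lift_snd _ _ _⟩
  let t' : F.R.obj b ⟶ F.R.obj a := ⟨pa.lift e (F.R.obj b).hom (by
    simp [a, ← e2]), by simp⟩
  have s1 : s.top ≫ F.top b = 𝟙 T := pb.lift_fst _ _ _
  have t1 : t'.top ≫ F.top a = e := by simp [t']
  have key : ∀ {X : 𝒞} (y : X ⟶ (F.R.obj b).dom) , y ≫ e ≫ d₂ = y ≫ F.top b := by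
    intro X y; rw [e1]
  let sp : IsSplitCoequalizer (F.R.map D₁) (F.R.map D₂) π :=
    { rightSection := s
      leftSection := t'
      condition := by
        apply slice_hom_ext
        simp only [slice_comp_top, π, ← Category.assoc]
        simp only [Category.assoc]
        have n1 := F.nat D₁
        have n2 := F.nat D₂
        have m1 := (F.R.map D₁).w
        have m2 := (F.R.map D₂).w
        have := ha ((F.R.map D₁).top ≫ e) ((F.R.map D₂).top ≫ e) (F.top a)
          (by rw [Category.assoc, e1, n1]) (by rw [Category.assoc, e1, n2])
          (by rw [Category.assoc, Category.assoc, e2, m1, m2])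
        simpa using this
      rightSection_π := by
        apply slice_hom_ext
        have := hu (s.top ≫ e) (by
          rw [Category.assoc, e2, s.w, Category.assoc, ← h2w, reassoc_of% e1, reassoc_of% s1]
          exact (Category.id_comp t).symm)
        rw [Category.assoc, Category.assoc, e1, s1] at this
        simpa [π] using this
      leftSection_bottom := by
        apply slice_hom_ext
        apply pb.hom_ext
        · rw [slice_comp_top, Category.assoc, F.nat, reassoc_of% t1]
          simpa [D₂] using e1
        · rw [(t' ≫ F.R.map D₂).w]; simp
      leftSection_top := by
        apply slice_hom_ext
        apply pb.hom_ext
        · rw [slice_comp_top, Category.assoc, F.nat, reassoc_of% t1, slice_comp_top,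
            Category.assoc, s1]
          exact ((Category.assoc _ _ _).trans (congrArg (e ≫ ·) (Category.comp_id d₁))).symm
        · rw [(t' ≫ F.R.map D₁).w, (π ≫ s).w] }
  have : F.R.IsSplitPair D₁ D₂ := ⟨⟨_, _, ⟨sp⟩⟩⟩
  let _ := Monad.createsGSplitCoequalizersOfMonadic F.R D₁ D₂
  have : HasColimit (parallelPair D₁ D₂ ⋙ F.R) := by
    have h0 : HasColimit (parallelPair (F.R.map D₁) (F.R.map D₂)) := inferInstance
    have : HasColimit (parallelPair ((parallelPair D₁ D₂ ⋙ F.R).map WalkingParallelPairHom.left)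
      ((parallelPair D₁ D₂ ⋙ F.R).map WalkingParallelPairHom.right)) := h0
    exact hasColimit_of_iso (diagramIsoParallelPair _)
  have : HasColimit (parallelPair D₁ D₂) := hasColimit_of_created _ F.R
  let Q := coequalizer D₁ D₂
  let c : b ⟶ Q := coequalizer.π D₁ D₂
  have hc : D₁ ≫ c = D₂ ≫ c := coequalizer.condition _ _
  have i1 := isColimitOfHasCoequalizerOfPreservesColimit F.R D₁ D₂
  let iso := IsColimit.coconePointUniqueUpToIso sp.isCoequalizer i1
  have hi : π ≫ iso.hom = F.R.map c :=
    IsColimit.comp_coconePointUniqueUpToIso_hom sp.isCoequalizer i1 WalkingParallelPair.one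
  have hgen : ∀ i : z ⟶ F.R.obj Q, π ≫ i = F.R.map c → i = s ≫ F.R.map c := by
    intro i h
    rw [← h, ← Category.assoc, sp.rightSection_π, Category.id_comp]
  have hi2 : iso.hom = s ≫ F.R.map c := hgen iso.hom hi
  have hi3 : IsIso (s ≫ F.R.map c) := hi2 ▸ (inferInstance : IsIso iso.hom)
  have hi4 := slice_top_isIso _ hi3
  have hi5 : (s ≫ F.R.map c).top ≫ F.top Q = c.top := by
    rw [slice_comp_top, Category.assoc, F.nat, reassoc_of% s1]
    exact Category.id_comp _
  refine ⟨Q.dom, Q.hom, c.top, Q.mem, ?_, congrArg ESliceHom.top hc, ?_⟩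
  · refine IsPullback.of_iso (F.isPB Q) (asIso (s ≫ F.R.map c).top).symm (Iso.refl _) (Iso.refl _)
      (Iso.refl _) ?_ ?_ (by simp) (by simp)
    · simp only [Iso.symm_hom, asIso_inv, Iso.refl_hom, Category.comp_id]
      rw [IsIso.eq_inv_comp]; exact hi5
    · simp only [Iso.symm_hom, asIso_inv, Iso.refl_hom, Category.comp_id]
      rw [IsIso.eq_inv_comp]; exact (s ≫ F.R.map c).w
  · intro Z z' m hz hm hd
    let zz : ESliceObj G.E B := ⟨Z, z', hz⟩
    let mm : b ⟶ zz := ⟨m, hm⟩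
    have hmm : D₁ ≫ mm = D₂ ≫ mm := slice_hom_ext hd
    exact ⟨(coequalizer.desc mm hmm).top, congrArg ESliceHom.top (coequalizer.π_desc mm hmm),
      (coequalizer.desc mm hmm).w⟩

/-- extensions are regular epimorphisms -/
lemma E_reg (h4 : AxE4 G.E) (hM : AxM G.E) {A B R : 𝒞} {f : A ⟶ B} (hf : G.E f) {π₁ π₂ : R ⟶ A}
    (hR : IsPullback π₁ π₂ f f) {Z : 𝒞} (h : A ⟶ Z) (hh : π₁ ≫ h = π₂ ≫ h) :
    ∃ n : B ⟶ Z, f ≫ n = h := by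
  have hw := hR.w
  obtain ⟨Q, q, c, hq, hpb, hc, huniv⟩ := descent G hM hf hR (𝟙 A) (G.E1 _ inferInstance) (𝟙 R)
    π₁ π₂ (IsPullback.id_vert π₂) (by
      rw [Category.id_comp]; exact G.E3 _ _ (E_fst G hR hf) hf) (by simp)
    (by intro X z hz; simpa using hz)
    (by intro X z₁ z₂ y _ _ hz; simpa using hz)
  have hcq : c ≫ q = f := by simpa using hpb.w
  have : IsIso q := by
    refine cons G hM hf hq (G.E1 (𝟙 B) inferInstance) q (by simp) hpb ?_
    rw [hcq]; exact IsPullback.id_vert f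
  obtain ⟨n, hn, -⟩ := huniv (prod.fst : B ⨯ Z ⟶ B) (prod.lift f h)
    (E_split G h4 (prod.lift (𝟙 B) 0) _ (prod.lift_fst _ _))
    ((prod.lift_fst _ _).trans (Category.id_comp _).symm)
    (by
      apply Limits.prod.hom_ext
      · rw [Category.assoc, Category.assoc]
        exact (congrArg (π₁ ≫ ·) (prod.lift_fst f h)).trans
          (hw.trans (congrArg (π₂ ≫ ·) (prod.lift_fst f h)).symm)
      · rw [Category.assoc, Category.assoc]
        exact (congrArg (π₁ ≫ ·) (prod.lift_snd f h)).trans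
          (hh.trans (congrArg (π₂ ≫ ·) (prod.lift_snd f h)).symm))
  refine ⟨inv q ≫ n ≫ prod.snd, ?_⟩
  rw [← hcq]
  rw [Category.assoc, IsIso.hom_inv_id_assoc, reassoc_of% hn]
  exact prod.lift_snd _ _

/-- extensions are cokernels of their kernels -/
lemma E_coker (hpm : ProtomodularCat 𝒞) (h4 : AxE4 G.E) (hM : AxM G.E) {A B K : 𝒞} {f : A ⟶ B}
    (hf : G.E f) {k : K ⟶ A} (hk : IsKer k f) {Z : 𝒞} (h : A ⟶ Z) (hh : k ≫ h = 0) :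
    ∃ n : B ⟶ Z, f ≫ n = h := by
  obtain ⟨R, π₁, π₂, hR⟩ := pbex f f
  refine E_reg G h4 hM hf hR h ?_
  refine joint_epi hpm (f := π₁) (s := hR.lift (𝟙 A) (𝟙 A) rfl) (by simp)
    (k := hR.lift 0 k (by simp [hk.w])) (hk.lift_pb hR.flip (by simp) (by simp)) _ _ ?_ ?_
  · simp [hh]
  · simp

/-- short five lemma for extensions -/
lemma short_five (hpm : ProtomodularCat 𝒞) (hM : AxM G.E) {C X Y K : 𝒞} {gX : X ⟶ C}
    {gY : Y ⟶ C} (hX : G.E gX) (hY : G.E gY) (v : X ⟶ Y) (hv : v ≫ gY = gX) {k : K ⟶ X}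
    (hk : IsKer k gX) (hk' : IsKer (k ≫ v) gY) : IsIso v := by
  obtain ⟨P, p₁, p₂, hP⟩ := pbex gX gX
  obtain ⟨Q, q₁, q₂, hQ⟩ := pbex gY gX
  let w : P ⟶ Q := hQ.lift (p₁ ≫ v) p₂ (by simp [hv, hP.w])
  have hw : IsIso w := by
    refine ssf hpm (hP.lift k 0 (by simp [hk.w])) p₂ (hP.lift (𝟙 _) (𝟙 _) rfl)
      (hQ.lift (k ≫ v) 0 (by simp [hv, hk.w])) q₂ (hQ.lift v (𝟙 _) (by simp [hv])) (𝟙 K) w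
      (by simp) (by simp) (hk.lift_pb hP (by simp) (by simp))
      (hk'.lift_pb hQ (by simp) (by simp)) ?_ (by simp [w]) inferInstance
    apply hQ.hom_ext <;> simp [w]
  refine cons G hM hX hX hY v hv hP ?_
  exact IsPullback.of_iso hQ (asIso w).symm (Iso.refl _) (Iso.refl _) (Iso.refl _)
    (by simp [w]) (by simp [w]) (by simp) (by simp)

end Monadic

section Galois
variable [HasZeroMorphisms 𝒞] [HasFiniteLimits 𝒞] {G : GaloisStructure 𝒞} (S : SecondStructure G)

lemma refl_ext {C D : 𝒞} (hD : G.inX D) (x y : G.I.obj C ⟶ D)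
    (h : G.η.app C ≫ x = G.η.app C ≫ y) : x = y := by
  obtain ⟨g, -, hg⟩ := G.refl_univ hD (G.η.app C ≫ x)
  exact (hg x rfl).trans (hg y h.symm).symm

lemma inX_of_retract {C : 𝒞} (r : G.I.obj C ⟶ C) (h : G.η.app C ≫ r = 𝟙 C) : G.inX C := by
  have h2 : r ≫ G.η.app C = 𝟙 _ := refl_ext (G.I_mem C) _ _ (by
      rw [← Category.assoc, h]
      exact (Category.id_comp _).trans (Category.comp_id _).symm)
  exact G.inX_iso ⟨r, G.η.app C, h2, h⟩ (G.I_mem C)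

lemma inX_ker {K X C : 𝒞} {k : K ⟶ X} {g : X ⟶ C} (hk : IsKer k g) (hX : G.inX X)
    (hC : G.inX C) : G.inX K := by
  obtain ⟨k', hk', -⟩ := G.refl_univ hX k
  have h0 : k' ≫ g = 0 := refl_ext hC _ _ (by
    rw [← Category.assoc, hk', hk.w, comp_zero])
  obtain ⟨l, hl⟩ := hk.ex k' h0
  refine inX_of_retract l (hk.mono _ _ ?_)
  rw [Category.assoc, hl, hk']
  exact (Category.id_comp k).symm

lemma FrKer (hproto : ProtoadditiveOn G.inX S.Fr) {K A B : 𝒞} {k : K ⟶ A} {f : A ⟶ B}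
    (hk : IsKer k f) (s : B ⟶ A) (hs : s ≫ f = 𝟙 B) (hA : G.inX A) (hB : G.inX B) :
    IsKer (S.Fr.map k) (S.Fr.map f) := by
  obtain ⟨h0, h⟩ := hproto.preserves k f s (inX_ker hk hA hB) hA hB hs hk.w (hk.lim hk.w)
  exact IsKer.of_lim h0 h

lemma Fr_pb (hpm : ProtomodularCat 𝒞) (hproto : ProtoadditiveOn G.inX S.Fr) {A B D C : 𝒞}
    {k : A ⟶ B} {l : A ⟶ D} {g : B ⟶ C} {h : D ⟶ C} (s : C ⟶ B) (hs : s ≫ g = 𝟙 C)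
    (hp : IsPullback k l g h) (hA : G.inX A) (hB : G.inX B) (hD : G.inX D) (hC : G.inX C) :
    IsPullback (S.Fr.map k) (S.Fr.map l) (S.Fr.map g) (S.Fr.map h) := by
  have hs' : hp.lift (h ≫ s) (𝟙 D) (by simp [hs]) ≫ l = 𝟙 D := by simp
  have hκ : IsKer (kernel.ι l) l := IsKer.kernel l
  refine split_pb hpm (by rw [← S.Fr.map_comp, ← S.Fr.map_comp, hp.w]) (S.Fr.map _)
    (by rw [← S.Fr.map_comp, hs', S.Fr.map_id]) (S.Fr.map s)
    (by rw [← S.Fr.map_comp, hs, S.Fr.map_id]) (FrKer S hproto hκ _ hs' hA hD) ?_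
  rw [← S.Fr.map_comp]
  exact FrKer S hproto (hκ.of_pb hp) s hs hB hC

lemma J_pb (hpm : ProtomodularCat 𝒞) (h4 : AxE4 G.E) (htype1 : PreservesType1 G.E G.I)
    (hproto : ProtoadditiveOn G.inX S.Fr) {A B D C : 𝒞}
    {k : A ⟶ B} {l : A ⟶ D} {g : B ⟶ C} {h : D ⟶ C} (s : C ⟶ B) (hs : s ≫ g = 𝟙 C)
    (hh : G.E h) (hp : IsPullback k l g h) :
    IsPullback ((G.I ⋙ S.Fr).map k) ((G.I ⋙ S.Fr).map l) ((G.I ⋙ S.Fr).map g)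
      ((G.I ⋙ S.Fr).map h) :=
  Fr_pb S hpm hproto (G.I.map s) (by rw [← G.I.map_comp, hs, G.I.map_id])
    (htype1 k l g h s hs (E_split G h4 s g hs) hh hp) (G.I_mem _) (G.I_mem _) (G.I_mem _)
    (G.I_mem _)

lemma unit_nat {A B : 𝒞} (f : A ⟶ B) :
    S.unit A ≫ (G.I ⋙ S.Fr).map f = f ≫ S.unit B := by
  have h1 := G.η.naturality f
  have h2 := S.θ.naturality (G.I.map f)
  simp only [Functor.id_map] at h1 h2
  simp only [SecondStructure.unit, Functor.comp_map, Category.assoc]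
  rw [← h2, ← Category.assoc, ← h1, Category.assoc]

lemma J_mem {A B : 𝒞} (f : A ⟶ B) (hf : G.E f) : G.E ((G.I ⋙ S.Fr).map f) :=
  G.F_sub_E _ (S.𝒢_sub_F _ (S.Fr_map_mem _ (G.I_map_mem f hf)))

lemma unit_mem (A : 𝒞) : G.E (S.unit A) :=
  G.E3 _ _ (G.η_mem A) (G.F_sub_E _ (S.θ_mem _ (G.I_mem A)))

lemma J_inY (A : 𝒞) : S.inY ((G.I ⋙ S.Fr).obj A) := S.Fr_mem _ (G.I_mem A)

lemma comp_ex {C D : 𝒞} (hD : S.inY D) (f : C ⟶ D) :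
    ∃ g : (G.I ⋙ S.Fr).obj C ⟶ D, S.unit C ≫ g = f := by
  obtain ⟨g, hg, -⟩ := G.refl_univ (S.Y_sub_X _ hD) f
  obtain ⟨g', hg', -⟩ := S.refl_univ (G.I_mem C) hD g
  exact ⟨g', by rw [SecondStructure.unit, Category.assoc, hg', hg]⟩

lemma triv_descend (hpm : ProtomodularCat 𝒞) (h4 : AxE4 G.E) (hM : AxM G.E)
    (htype1 : PreservesType1 G.E G.I)
    (hproto : ProtoadditiveOn G.inX S.Fr) {X' X D C : 𝒞} {x : X' ⟶ X} {l : X' ⟶ D} {p : X ⟶ C}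
    {h : D ⟶ C} (s : C ⟶ X) (hs : s ≫ p = 𝟙 C) (hh : G.E h) (hp : IsPullback x l p h)
    (hl : S.TrivialComp l) : S.TrivialComp p := by
  have hpE := E_split G h4 s p hs
  refine cons_pb G hM hh hpE (J_mem S p hpE) (unit_nat S p) hp ?_
  rw [← unit_nat, ← unit_nat]
  exact hl.paste_horiz (J_pb S hpm h4 htype1 hproto s hs hh hp)

end Galois

section Main
variable [HasZeroMorphisms 𝒞] [HasFiniteLimits 𝒞] {G : GaloisStructure 𝒞} (S : SecondStructure G)

lemma stepA (h4 : AxE4 G.E) (h5 : AxE5 G.E) (hM : AxM G.E)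
    (hproto : ProtoadditiveOn G.inX S.Fr) {A B R K : 𝒞} {f : A ⟶ B} (hf : G.Normal f)
    {π₁ π₂ : R ⟶ A} (hR : IsPullback π₁ π₂ f f) {ι : K ⟶ A} (hι : IsKer ι f)
    {κ : K ⟶ R} (hκ1 : κ ≫ π₁ = 0) (hκ2 : κ ≫ π₂ = ι) :
    G.inX K ∧ ∃ (T : 𝒞) (t : T ⟶ A) (ρ : R ⟶ T) (κT : S.Fr.obj K ⟶ T),
      G.E t ∧ G.E ρ ∧ ρ ≫ t = π₁ ∧ IsKer κT t ∧ κ ≫ ρ = S.θ.app K ≫ κT ∧ S.TrivialComp t := by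
  have htriv : IsPullback (G.η.app R) π₁ (G.I.map π₁) (G.η.app A) := hf.2 π₁ π₂ hR
  have hκ : IsKer κ π₁ := hι.lift_pb hR.flip hκ2 hκ1
  have hκη : IsKer (κ ≫ G.η.app R) (G.I.map π₁) := hκ.of_pb htriv
  have hK : G.inX K := inX_ker hκη (G.I_mem _) (G.I_mem _)
  have hdiag : hR.lift (𝟙 A) (𝟙 A) rfl ≫ π₁ = 𝟙 A := by simp
  have hFr : IsKer (S.Fr.map (κ ≫ G.η.app R)) ((G.I ⋙ S.Fr).map π₁) :=
    FrKer S hproto hκη (G.I.map (hR.lift (𝟙 A) (𝟙 A) rfl))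
      (by rw [← G.I.map_comp, hdiag, G.I.map_id]) (G.I_mem _) (G.I_mem _)
  have hπE : G.E π₁ := E_fst G hR hf.1
  obtain ⟨T, w, t, hT⟩ := pbex ((G.I ⋙ S.Fr).map π₁) (S.unit A)
  have htE : G.E t := E_snd G hT (J_mem S _ hπE)
  let ρ : R ⟶ T := hT.lift (S.unit R) π₁ (unit_nat S π₁)
  have hρw : ρ ≫ w = S.unit R := hT.lift_fst _ _ _
  have hρt : ρ ≫ t = π₁ := hT.lift_snd _ _ _
  let κT : S.Fr.obj K ⟶ T := hT.lift (S.Fr.map (κ ≫ G.η.app R)) 0 (by rw [hFr.w, zero_comp])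
  have hκTw : κT ≫ w = S.Fr.map (κ ≫ G.η.app R) := hT.lift_fst _ _ _
  have hκTt : κT ≫ t = 0 := hT.lift_snd _ _ _
  have hκT : IsKer κT t := hFr.lift_pb hT hκTw hκTt
  have hcomm : κ ≫ ρ = S.θ.app K ≫ κT := by
    apply hT.hom_ext
    · rw [Category.assoc, Category.assoc, hρw, hκTw]
      have := S.θ.naturality (κ ≫ G.η.app R)
      rw [← this]
      simp [SecondStructure.unit]
    · rw [Category.assoc, Category.assoc, hρt, hκTt, hκ1, comp_zero]
  have hρE : G.E ρ := h5 κ κT π₁ t ρ (S.θ.app K) hρt hcomm.symm hκ1 hκTt (hκ.lim _) (hκT.lim _)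
    hπE (G.F_sub_E _ (S.θ_mem K hK))
  refine ⟨hK, T, t, ρ, κT, htE, hρE, hρt, hκT, hcomm, ?_⟩
  obtain ⟨w', hw'⟩ := comp_ex S (J_inY S R) w
  have : Epi ρ := E_epi G h4 hM ρ hρE
  have : Epi (S.unit R) := E_epi G h4 hM _ (unit_mem S R)
  have : Epi (S.unit T) := E_epi G h4 hM _ (unit_mem S T)
  have hwρ : w ≫ (G.I ⋙ S.Fr).map ρ = S.unit T := by
    rw [← cancel_epi ρ, ← Category.assoc, hρw, unit_nat]
  let e : (G.I ⋙ S.Fr).obj R ≅ (G.I ⋙ S.Fr).obj T :=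
    { hom := (G.I ⋙ S.Fr).map ρ
      inv := w'
      hom_inv_id := by
        rw [← cancel_epi (S.unit R), ← Category.assoc, unit_nat, Category.assoc, hw', hρw]
        exact (Category.comp_id _).symm
      inv_hom_id := by
        rw [← cancel_epi (S.unit T), ← Category.assoc, hw', hwρ]
        exact (Category.comp_id _).symm }
  exact IsPullback.of_iso hT (Iso.refl _) e (Iso.refl _) (Iso.refl _)
    (by simpa [e] using hwρ) (by simp) (by
      simp only [e, Iso.refl_hom, Category.comp_id]
      rw [← Functor.map_comp, hρt]) (by simp)

lemma stepB (hpm : ProtomodularCat 𝒞) (h4 : AxE4 G.E) (h5 : AxE5 G.E) (hM : AxM G.E)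
    {A B R K L T : 𝒞} {f : A ⟶ B} (hf : G.E f)
    {π₁ π₂ : R ⟶ A} (hR : IsPullback π₁ π₂ f f) {ι : K ⟶ A} (hι : IsKer ι f)
    {κ : K ⟶ R} (hκ1 : κ ≫ π₁ = 0) (hκ2 : κ ≫ π₂ = ι) {t : T ⟶ A} {ρ : R ⟶ T} {κT : L ⟶ T}
    {θ : K ⟶ L} (ht : G.E t) (hρ : G.E ρ) (hρt : ρ ≫ t = π₁) (hκT : IsKer κT t)
    (hcomm : κ ≫ ρ = θ ≫ κT) (hθ : G.E θ) :
    ∃ (Q : 𝒞) (q : Q ⟶ B) (c : T ⟶ Q) (q' : A ⟶ Q), G.E q ∧ G.E q' ∧ IsPullback c t q f ∧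
      π₂ ≫ q' = ρ ≫ c ∧ q' ≫ q = f ∧ IsKer (κT ≫ c) q ∧ θ ≫ κT ≫ c = ι ≫ q' := by
  obtain ⟨T₂, d₂, t₂, h2⟩ := pbex t π₂
  obtain ⟨R₂, ry, rx, hR₂⟩ := pbex π₁ π₂
  let σ : R₂ ⟶ T₂ := h2.lift (ry ≫ ρ) rx (by rw [Category.assoc, hρt, hR₂.w])
  have σ1 : σ ≫ d₂ = ry ≫ ρ := h2.lift_fst _ _ _
  have σ2 : σ ≫ t₂ = rx := h2.lift_snd _ _ _
  have hRw := hR.w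
  have hw2 := hR₂.w
  let comp : R₂ ⟶ R := hR.lift (rx ≫ π₁) (ry ≫ π₂) (by
    rw [Category.assoc, Category.assoc, ← hRw, reassoc_of% hw2, hRw])
  have c1 : comp ≫ π₁ = rx ≫ π₁ := hR.lift_fst _ _ _
  have c2 : comp ≫ π₂ = ry ≫ π₂ := hR.lift_snd _ _ _
  have hσpb : IsPullback ry σ ρ d₂ := by
    refine IsPullback.of_bot ?_ σ1.symm h2
    rw [σ2, hρt]; exact hR₂
  have hσ : G.E σ := E_snd G hσpb hρ
  have : Epi σ := E_epi G h4 hM σ hσ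
  obtain ⟨d₁, hd₁⟩ : ∃ d₁ : T₂ ⟶ T, σ ≫ d₁ = comp ≫ ρ := by
    refine E_coker G hpm h4 hM hσ (IsKer.kernel σ) (comp ≫ ρ) ?_
    have k0 : kernel.ι σ ≫ σ = 0 := kernel.condition σ
    have k1 : kernel.ι σ ≫ rx = 0 := by rw [← σ2, reassoc_of% k0, zero_comp]
    have k2 : kernel.ι σ ≫ ry ≫ ρ = 0 := by rw [← σ1, reassoc_of% k0, zero_comp]
    have k3 : kernel.ι σ ≫ comp = kernel.ι σ ≫ ry := by
      apply hR.hom_ext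
      · rw [Category.assoc, Category.assoc, c1, hw2, reassoc_of% k1, reassoc_of% k1, zero_comp,
          zero_comp]
      · rw [Category.assoc, Category.assoc, c2]
    rw [reassoc_of% k3, k2]
  have h1 : d₁ ≫ t = t₂ ≫ π₁ := by
    rw [← cancel_epi σ, reassoc_of% hd₁, hρt, c1, reassoc_of% σ2]
  have h2w := h2.w
  have hcov : ∀ {X : 𝒞} (z : X ⟶ T₂), ∃ (X' : 𝒞) (e : X' ⟶ X) (z' : X' ⟶ R₂), Epi e ∧
      z' ≫ σ = e ≫ z := by
    intro X z
    obtain ⟨X', z', e, hX⟩ := pbex σ z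
    exact ⟨X', e, z', E_epi G h4 hM e (E_snd G hX hσ), hX.w⟩
  obtain ⟨Q, q, c, hq, hpb, hdc, -⟩ := descent G hM hf hR t ht t₂ d₁ d₂ h2
    (G.E3 _ _ (E_snd G h2 ht) (G.E3 _ _ (E_fst G hR hf) hf)) h1
    (by
      intro X z hz
      obtain ⟨X', e, z', he, hz'⟩ := hcov z
      rw [← cancel_epi e, ← reassoc_of% hz', ← reassoc_of% hz', hd₁, σ1]
      have : z' ≫ comp = z' ≫ ry := by
        apply hR.hom_ext
        · rw [Category.assoc, Category.assoc, c1, hw2, ← σ2, Category.assoc, Category.assoc,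
            reassoc_of% hz', reassoc_of% hz', hz]
        · rw [Category.assoc, Category.assoc, c2]
      rw [reassoc_of% this])
    (by
      intro X z₁ z₂ y e1 e2 e3
      obtain ⟨X', e, y', he, hy'⟩ := hcov y
      have yx : y' ≫ rx = e ≫ y ≫ t₂ := by rw [← σ2, reassoc_of% hy']
      let z₁' : X' ⟶ R₂ := hR₂.lift (y' ≫ comp) (e ≫ z₁ ≫ t₂) (by
        simp only [Category.assoc]
        rw [c1, reassoc_of% yx, ← h2w, reassoc_of% e1, h1])
      let z₂' : X' ⟶ R₂ := hR₂.lift (y' ≫ ry) (e ≫ z₂ ≫ t₂) (by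
        simp only [Category.assoc]
        rw [hw2, reassoc_of% yx, ← h2w, reassoc_of% e2])
      have a1 : z₁' ≫ ry = y' ≫ comp := hR₂.lift_fst _ _ _
      have a2 : z₁' ≫ rx = e ≫ z₁ ≫ t₂ := hR₂.lift_snd _ _ _
      have b1 : z₂' ≫ ry = y' ≫ ry := hR₂.lift_fst _ _ _
      have b2 : z₂' ≫ rx = e ≫ z₂ ≫ t₂ := hR₂.lift_snd _ _ _
      have a3 : z₁' ≫ σ = e ≫ z₁ := by
        apply h2.hom_ext
        · rw [Category.assoc, Category.assoc, σ1, reassoc_of% a1, ← hd₁, reassoc_of% hy', e1]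
        · rw [Category.assoc, Category.assoc, σ2, a2]
      have b3 : z₂' ≫ σ = e ≫ z₂ := by
        apply h2.hom_ext
        · rw [Category.assoc, Category.assoc, σ1, reassoc_of% b1, ← σ1, reassoc_of% hy', e2]
        · rw [Category.assoc, Category.assoc, σ2, b2]
      have e4 : z₁' ≫ comp = z₂' ≫ comp := by
        apply hR.hom_ext
        · rw [Category.assoc, Category.assoc, c1, reassoc_of% a2, reassoc_of% b2, e3]
        · rw [Category.assoc, Category.assoc, c2, reassoc_of% a1, reassoc_of% b1, c2]
      rw [← cancel_epi e, ← reassoc_of% a3, ← reassoc_of% b3, hd₁, reassoc_of% e4])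
  let δ : A ⟶ R := hR.lift (𝟙 A) (𝟙 A) rfl
  have δ1 : δ ≫ π₁ = 𝟙 A := hR.lift_fst _ _ _
  have δ2 : δ ≫ π₂ = 𝟙 A := hR.lift_snd _ _ _
  let m : R ⟶ R₂ := hR₂.lift (π₂ ≫ δ) (𝟙 R) (by rw [Category.assoc, δ1]; simp)
  have m1 : m ≫ ry = π₂ ≫ δ := hR₂.lift_fst _ _ _
  have m2 : m ≫ rx = 𝟙 R := hR₂.lift_snd _ _ _
  have m3 : m ≫ comp = 𝟙 R := by
    apply hR.hom_ext
    · rw [Category.assoc, c1, reassoc_of% m2, Category.id_comp]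
    · rw [Category.assoc, c2, reassoc_of% m1, δ2, Category.id_comp, Category.comp_id]
  have hq' : π₂ ≫ δ ≫ ρ ≫ c = ρ ≫ c := by
    have := congrArg (fun z => m ≫ σ ≫ z) hdc
    rw [reassoc_of% hd₁, reassoc_of% m3, reassoc_of% σ1, reassoc_of% m1] at this
    exact this.symm
  have hq'q : (δ ≫ ρ ≫ c) ≫ q = f := by
    simp only [Category.assoc]
    rw [hpb.w, reassoc_of% hρt, reassoc_of% δ1]
  have hk := hκT.of_pb hpb
  have hθq : θ ≫ κT ≫ c = ι ≫ δ ≫ ρ ≫ c := by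
    rw [← reassoc_of% hcomm, ← hκ2, Category.assoc, hq']
  refine ⟨Q, q, c, δ ≫ ρ ≫ c, hq, ?_, hpb, hq', hq'q, hk, hθq⟩
  exact h5 ι (κT ≫ c) f q _ θ hq'q hθq hι.w hk.w (hι.lim _) (hk.lim _) hf hθ

end Main

section Main2
variable [HasZeroMorphisms 𝒞] [HasFiniteLimits 𝒞] {G : GaloisStructure 𝒞} (S : SecondStructure G)

lemma normal_desc (hpm : ProtomodularCat 𝒞) (h4 : AxE4 G.E) (hM : AxM G.E)
    (htype1 : PreservesType1 G.E G.I) (hproto : ProtoadditiveOn G.inX S.Fr)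
    {A B Q T : 𝒞} {f : A ⟶ B} {q : Q ⟶ B} {q' : A ⟶ Q} {c : T ⟶ Q} {t : T ⟶ A}
    (hq : G.E q) (hq' : G.E q') (hqq : q' ≫ q = f) (hpb : IsPullback c t q f)
    (ht : S.TrivialComp t) : S.NormalComp q := by
  refine ⟨hq, fun {P} p₁ p₂ hP => ?_⟩
  let x : T ⟶ P := hP.lift (t ≫ q') c (by rw [Category.assoc, hqq, hpb.w])
  have x1 : x ≫ p₁ = t ≫ q' := hP.lift_fst _ _ _
  have x2 : x ≫ p₂ = c := hP.lift_snd _ _ _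
  have hx : IsPullback x t p₁ q' := by
    refine IsPullback.of_right ?_ x1 hP.flip
    rw [x2, hqq]; exact hpb
  exact triv_descend S hpm h4 hM htype1 hproto (hP.lift (𝟙 _) (𝟙 _) rfl) (hP.lift_fst _ _ _)
    hq' hx ht

lemma kill {K Q C : 𝒞} {g : Q ⟶ C} (hg : S.NormalComp g) (hK : G.inX K) (j : K ⟶ Q)
    (hj : j ≫ g = 0) {X : 𝒞} (y : X ⟶ K) (hy : y ≫ S.θ.app K = 0) : y ≫ j = 0 := by
  obtain ⟨P, p₁, p₂, hP⟩ := pbex g g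
  have ht : IsPullback (S.unit P) p₁ ((G.I ⋙ S.Fr).map p₁) (S.unit Q) := hg.2 p₁ p₂ hP
  let κ : K ⟶ P := hP.lift 0 j (by rw [hj, zero_comp])
  have κ1 : κ ≫ p₁ = 0 := hP.lift_fst _ _ _
  have κ2 : κ ≫ p₂ = j := hP.lift_snd _ _ _
  obtain ⟨g', hg', -⟩ := S.refl_univ hK (J_inY S P) (κ ≫ S.unit P)
  have h0 : y ≫ κ = 0 := by
    apply ht.hom_ext
    · rw [Category.assoc, ← hg', zero_comp, ← Category.assoc]
      exact (congrArg (· ≫ g') hy).trans zero_comp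
    · rw [Category.assoc, κ1, comp_zero, zero_comp]
  rw [← κ2, reassoc_of% h0, zero_comp]

lemma ML (hpm : ProtomodularCat 𝒞) (h4 : AxE4 G.E) (h5 : AxE5 G.E) (hM : AxM G.E)
    (htype1 : PreservesType1 G.E G.I) (hproto : ProtoadditiveOn G.inX S.Fr)
    (ND : Normalization G.E (fun _ _ f => S.NormalComp f))
    (f : ExtObj G.E) (hf : G.Normal f.hom) {K : 𝒞} {ι : K ⟶ f.dom} (hι : IsKer ι f.hom) :
    G.inX K ∧ ∃ j : S.Fr.obj K ⟶ (ND.I₁.obj f).dom, IsKer j (ND.I₁.obj f).hom ∧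
      S.θ.app K ≫ j = ι ≫ (ND.η₁.app f).top := by
  obtain ⟨R, π₁, π₂, hR⟩ := pbex f.hom f.hom
  have κ1 : hR.lift 0 ι (by rw [hι.w, zero_comp]) ≫ π₁ = 0 := hR.lift_fst _ _ _
  have κ2 : hR.lift 0 ι (by rw [hι.w, zero_comp]) ≫ π₂ = ι := hR.lift_snd _ _ _
  obtain ⟨hK, T, t, ρ, κT, ht, hρ, hρt, hκT, hcomm, htriv⟩ :=
    stepA S h4 h5 hM hproto hf hR hι κ1 κ2
  refine ⟨hK, ?_⟩
  obtain ⟨Q, q, c, q', hq, hq', hpb, hπq, hqq, hker, hθ⟩ :=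
    stepB hpm h4 h5 hM hf.1 hR hι κ1 κ2 ht hρ hρt hκT hcomm (G.F_sub_E _ (S.θ_mem K hK))
  have hN : S.NormalComp q := normal_desc S hpm h4 hM htype1 hproto hq hq' hqq hpb htriv
  have : Epi q' := E_epi G h4 hM q' hq'
  obtain ⟨e, he⟩ : ∃ e : f ⟶ ND.I₁.obj f, e = ND.η₁.app f := ⟨_, rfl⟩
  have hew := e.w
  have hNN : S.NormalComp (ND.I₁.obj f).hom := ND.mem f
  obtain ⟨m, hm⟩ : ∃ m : Q ⟶ (ND.I₁.obj f).dom, q' ≫ m = e.top := by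
    refine E_coker G hpm h4 hM hq' (IsKer.kernel q') e.top ?_
    have k0 : kernel.ι q' ≫ q' = 0 := kernel.condition q'
    obtain ⟨y, hy⟩ := hι.ex (kernel.ι q') (by rw [← hqq, reassoc_of% k0, zero_comp])
    have hyθ : y ≫ S.θ.app K = 0 := by
      apply hker.mono
      rw [Category.assoc, hθ, reassoc_of% hy, k0, zero_comp]
    rw [← hy, Category.assoc]
    refine kill S hNN hK (ι ≫ e.top) ?_ y hyθ
    rw [Category.assoc, hew, ← Category.assoc, hι.w, zero_comp]
  let Qe : ExtObj G.E := ⟨Q, f.cod, q, hq⟩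
  let φ : f ⟶ Qe := ⟨q', 𝟙 f.cod, hqq.trans (Category.comp_id _).symm⟩
  have hmw : m ≫ (ND.I₁.obj f).hom = q ≫ e.bot := by
    rw [← cancel_epi q', reassoc_of% hm, hew, reassoc_of% hqq]
  let m' : Qe ⟶ ND.I₁.obj f := ⟨m, e.bot, hmw⟩
  have hφm : φ ≫ m' = e := ext_hom_ext hm (Category.id_comp _)
  obtain ⟨ψ, hψ, -⟩ := ND.refl_univ f Qe hN φ
  have hψ' : e ≫ ψ = φ := by rw [he]; exact hψ
  have h1 : ψ ≫ m' = 𝟙 _ := by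
    obtain ⟨g, -, hg⟩ := ND.refl_univ f _ hNN e
    have e1 := hg (ψ ≫ m') (by
      show ND.η₁.app f ≫ ψ ≫ m' = e
      rw [← he, reassoc_of% hψ', hφm])
    have e2 := hg (𝟙 _) (by
      show ND.η₁.app f ≫ 𝟙 _ = e
      rw [he]; exact Category.comp_id _)
    exact e1.trans e2.symm
  have h1t : ψ.top ≫ m = 𝟙 _ := congrArg ExtHom.top h1
  have h2t : m ≫ ψ.top = 𝟙 _ := by
    have hh : e.top ≫ ψ.top = q' := congrArg ExtHom.top hψ'
    rw [← cancel_epi q', reassoc_of% hm, hh, Category.comp_id]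
  have hmi : IsIso m := ⟨⟨ψ.top, h2t, h1t⟩⟩
  have hbi : IsIso e.bot := by rw [he]; exact ND.bot_iso f
  refine ⟨(κT ≫ c) ≫ m, hker.of_pb (IsPullback.of_horiz_isIso ⟨hmw⟩), ?_⟩
  rw [← he, ← hm, ← Category.assoc, hθ, Category.assoc]

end Main2

section Ext
variable [HasZeroMorphisms 𝒞] [HasFiniteLimits 𝒞] {G : GaloisStructure 𝒞} (S : SecondStructure G)

lemma DK (h4 : AxE4 G.E) (h5 : AxE5 G.E) {a b : ExtObj G.E} (p : a ⟶ b) (s : b ⟶ a)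
    (hs : s ≫ p = 𝟙 b) {K₁ K₀ : 𝒞} {k₁ : K₁ ⟶ a.dom} {k₀ : K₀ ⟶ a.cod} (hk₁ : IsKer k₁ p.top)
    (hk₀ : IsKer k₀ p.bot) (h : K₁ ⟶ K₀) (hh : h ≫ k₀ = k₁ ≫ a.hom) : G.E h := by
  have hst : s.top ≫ p.top = 𝟙 _ := congrArg ExtHom.top hs
  have hpw := p.w
  have hsw := s.w
  obtain ⟨P, u, v, hP⟩ := pbex p.bot b.hom
  let l : a.dom ⟶ P := hP.lift a.hom p.top hpw.symm
  have l1 : l ≫ u = a.hom := hP.lift_fst _ _ _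
  have l2 : l ≫ v = p.top := hP.lift_snd _ _ _
  have hka : IsKer (kernel.ι a.hom) a.hom := IsKer.kernel _
  have hkb : IsKer (kernel.ι b.hom) b.hom := IsKer.kernel _
  let kb : kernel b.hom ⟶ P := hP.lift 0 (kernel.ι b.hom) (by rw [hkb.w, zero_comp])
  have kb1 : kb ≫ u = 0 := hP.lift_fst _ _ _
  have kb2 : kb ≫ v = kernel.ι b.hom := hP.lift_snd _ _ _
  have hkb' : IsKer kb u := hkb.lift_pb hP.flip kb2 kb1
  obtain ⟨kp, hkp⟩ := hkb.ex (kernel.ι a.hom ≫ p.top) (by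
    rw [Category.assoc, hpw, ← Category.assoc, hka.w, zero_comp])
  obtain ⟨ks, hks⟩ := hka.ex (kernel.ι b.hom ≫ s.top) (by
    rw [Category.assoc, hsw, ← Category.assoc, hkb.w, zero_comp])
  have hsp : ks ≫ kp = 𝟙 _ := by
    apply hkb.mono
    rw [Category.assoc, hkp, reassoc_of% hks, hst, Category.comp_id, Category.id_comp]
  have hl : G.E l := by
    refine h5 (kernel.ι a.hom) kb a.hom u l kp l1 ?_ hka.w kb1 (hka.lim _) (hkb'.lim _) a.mem
      (E_split G h4 ks kp hsp)
    apply hP.hom_ext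
    · rw [Category.assoc, Category.assoc, kb1, l1, hka.w, comp_zero]
    · rw [Category.assoc, Category.assoc, kb2, l2, hkp]
  let n : K₀ ⟶ P := hP.lift k₀ 0 (by rw [hk₀.w, zero_comp])
  have n1 : n ≫ u = k₀ := hP.lift_fst _ _ _
  have n2 : n ≫ v = 0 := hP.lift_snd _ _ _
  have hpb : IsPullback k₁ h l n := by
    have hw : k₁ ≫ l = h ≫ n := by
      apply hP.hom_ext
      · rw [Category.assoc, Category.assoc, l1, n1, hh]
      · rw [Category.assoc, Category.assoc, l2, n2, hk₁.w, comp_zero]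
    have hz : ∀ c : PullbackCone l n, c.fst ≫ p.top = 0 := by
      intro c
      rw [← l2, ← Category.assoc, c.condition, Category.assoc, n2, comp_zero]
    refine ⟨⟨hw⟩, ⟨PullbackCone.IsLimit.mk hw (fun c => (hk₁.ex c.fst (hz c)).choose) ?_ ?_ ?_⟩⟩
    · intro c
      exact (hk₁.ex c.fst (hz c)).choose_spec
    · intro c
      have hc := (hk₁.ex c.fst (hz c)).choose_spec
      have hcc := c.condition
      apply hk₀.mono
      rw [Category.assoc, hh, reassoc_of% hc, ← l1, reassoc_of% hcc, n1]
    · intro c m hm _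
      exact hk₁.mono _ _ (hm.trans (hk₁.ex c.fst (hz c)).choose_spec.symm)
  exact E_snd G hpb hl

lemma extKer {c a b : ExtObj G.E} {k : c ⟶ a} {p : a ⟶ b} (h1 : IsKer k.top p.top)
    (h0 : IsKer k.bot p.bot) : IsKer k p := by
  refine ⟨ext_hom_ext h1.w h0.w, ?_, ?_⟩
  · intro X x y hxy
    exact ext_hom_ext (h1.mono _ _ (congrArg ExtHom.top hxy))
      (h0.mono _ _ (congrArg ExtHom.bot hxy))
  · intro X x hx
    obtain ⟨l₁, hl₁⟩ := h1.ex x.top (congrArg ExtHom.top hx)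
    obtain ⟨l₀, hl₀⟩ := h0.ex x.bot (congrArg ExtHom.bot hx)
    have hxw := x.w
    have hkw := k.w
    refine ⟨⟨l₁, l₀, ?_⟩, ext_hom_ext hl₁ hl₀⟩
    apply h0.mono
    rw [Category.assoc, Category.assoc, hl₀, ← hkw, reassoc_of% hl₁, hxw]

lemma extKer_comp (h4 : AxE4 G.E) (h5 : AxE5 G.E) {c a b : ExtObj G.E} {k : c ⟶ a} {p : a ⟶ b}
    (hk : IsKer k p) (s : b ⟶ a) (hs : s ≫ p = 𝟙 b) : IsKer k.top p.top ∧ IsKer k.bot p.bot := by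
  have hpw := p.w
  have h1 : IsKer (kernel.ι p.top) p.top := IsKer.kernel _
  have h0 : IsKer (kernel.ι p.bot) p.bot := IsKer.kernel _
  obtain ⟨h, hh⟩ := h0.ex (kernel.ι p.top ≫ a.hom) (by
    rw [Category.assoc, ← hpw, ← Category.assoc, h1.w, zero_comp])
  let c' : ExtObj G.E := ⟨kernel p.top, kernel p.bot, h, DK h4 h5 p s hs h1 h0 h hh⟩
  let κ : c' ⟶ a := ⟨kernel.ι p.top, kernel.ι p.bot, hh.symm⟩
  have hκ : IsKer κ p := extKer h1 h0
  obtain ⟨u, hu⟩ := hκ.ex k hk.w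
  have hi : IsIso u := hk.isIso hκ u hu
  have i1 : IsIso u.top := ⟨⟨(inv u).top, congrArg ExtHom.top (IsIso.hom_inv_id u),
    congrArg ExtHom.top (IsIso.inv_hom_id u)⟩⟩
  have i0 : IsIso u.bot := ⟨⟨(inv u).bot, congrArg ExtHom.bot (IsIso.hom_inv_id u),
    congrArg ExtHom.bot (IsIso.inv_hom_id u)⟩⟩
  constructor
  · rw [← hu]; exact h1.iso_comp u.top
  · rw [← hu]; exact h0.iso_comp u.bot

variable {N : MorphismProperty 𝒞} (ND : Normalization G.E N)

lemma e_top {a b : ExtObj G.E} (φ : a ⟶ b) :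
    φ.top ≫ (ND.η₁.app b).top = (ND.η₁.app a).top ≫ (ND.I₁.map φ).top :=
  congrArg ExtHom.top (ND.η₁.naturality φ)

lemma e_bot {a b : ExtObj G.E} (φ : a ⟶ b) :
    φ.bot ≫ (ND.η₁.app b).bot = (ND.η₁.app a).bot ≫ (ND.I₁.map φ).bot :=
  congrArg ExtHom.bot (ND.η₁.naturality φ)

lemma I₁_zero (a b : ExtObj G.E) : ND.I₁.map (0 : a ⟶ b) = 0 := by
  obtain ⟨g, -, hg⟩ := ND.refl_univ a (ND.I₁.obj b) (ND.mem b) 0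
  have e1 := hg (ND.I₁.map 0) (by
    refine (ND.η₁.naturality (0 : a ⟶ b)).symm.trans ?_
    exact zero_comp)
  have e2 := hg 0 comp_zero
  exact e1.trans e2.symm

lemma rad_ι {a b : ExtObj G.E} (φ : a ⟶ b) :
    rad1map ND φ ≫ kernel.ι ((ND.η₁.app b).top) = kernel.ι ((ND.η₁.app a).top) ≫ φ.top := by
  unfold rad1map
  exact kernel.lift_ι _ _ _

end Ext

section Final
variable [HasZeroMorphisms 𝒞] [HasFiniteLimits 𝒞] {G : GaloisStructure 𝒞} (S : SecondStructure G)

lemma part1 (hpm : ProtomodularCat 𝒞) (h4 : AxE4 G.E) (h5 : AxE5 G.E) (hM : AxM G.E)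
    (htype1 : PreservesType1 G.E G.I) (hproto : ProtoadditiveOn G.inX S.Fr)
    (ND : Normalization G.E (fun _ _ f => S.NormalComp f))
    (f : ExtObj G.E) (hf : G.Normal f.hom) :
    ∃ e : kernel ((ND.η₁.app f).top) ≅ kernel (S.unit (kernel f.hom)),
      e.hom ≫ (kernel.ι (S.unit (kernel f.hom)) ≫ kernel.ι f.hom) =
        kernel.ι ((ND.η₁.app f).top) := by
  have hι : IsKer (kernel.ι f.hom) f.hom := IsKer.kernel _
  obtain ⟨hK, j, hj, hθ⟩ := ML S hpm h4 h5 hM htype1 hproto ND f hf hι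
  obtain ⟨e, he⟩ : ∃ e : f ⟶ ND.I₁.obj f, e = ND.η₁.app f := ⟨_, rfl⟩
  have hbi : IsIso e.bot := by rw [he]; exact ND.bot_iso f
  have hew := e.w
  have hηi : IsIso (G.η.app (kernel f.hom)) := G.η_iso_of_mem hK
  have hun : S.unit (kernel f.hom) = S.θ.app (kernel f.hom) ≫
      S.Fr.map (G.η.app (kernel f.hom)) := S.θ.naturality (G.η.app (kernel f.hom))
  have hu : ∀ {X : 𝒞} (y : X ⟶ kernel f.hom), y ≫ S.unit (kernel f.hom) = 0 ↔
      y ≫ S.θ.app (kernel f.hom) = 0 := by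
    intro X y
    rw [hun, ← Category.assoc]
    constructor
    · intro h
      have := congrArg (· ≫ inv (S.Fr.map (G.η.app (kernel f.hom)))) h
      simpa using this
    · intro h
      exact (congrArg (· ≫ S.Fr.map (G.η.app (kernel f.hom))) h).trans zero_comp
  have hku : IsKer (kernel.ι (S.unit (kernel f.hom))) (S.unit (kernel f.hom)) := IsKer.kernel _
  rw [← he] at hθ ⊢
  have hker : IsKer (kernel.ι (S.unit (kernel f.hom)) ≫ kernel.ι f.hom) e.top := by
    refine ⟨?_, ?_, ?_⟩
    · rw [Category.assoc, ← hθ, ← Category.assoc]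
      exact (congrArg (· ≫ j) ((hu _).1 hku.w)).trans zero_comp
    · intro X x y hxy
      apply hku.mono
      apply hι.mono
      simpa using hxy
    · intro X x hx
      have h0 : x ≫ f.hom = 0 := by
        rw [← cancel_mono e.bot, Category.assoc, ← hew, reassoc_of% hx, zero_comp, zero_comp]
      obtain ⟨y, hy⟩ := hι.ex x h0
      have hyθ : y ≫ S.θ.app (kernel f.hom) = 0 := by
        apply hj.mono
        rw [Category.assoc, hθ, reassoc_of% hy, hx, zero_comp]
      obtain ⟨z, hz⟩ := hku.ex y ((hu y).2 hyθ)
      exact ⟨z, by rw [reassoc_of% hz, hy]⟩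
  have hke : IsKer (kernel.ι e.top) e.top := IsKer.kernel _
  obtain ⟨i, hi⟩ := hker.ex _ hke.w
  have := hke.isIso hker i hi
  exact ⟨asIso i, hi⟩

lemma part3 (hpm : ProtomodularCat 𝒞) (h4 : AxE4 G.E) (h5 : AxE5 G.E) (hM : AxM G.E)
    (htype1 : PreservesType1 G.E G.I) (hproto : ProtoadditiveOn G.inX S.Fr)
    (ND : Normalization G.E (fun _ _ f => S.NormalComp f))
    {c a b : ExtObj G.E} (k : c ⟶ a) (p : a ⟶ b) (s : b ⟶ a)
    (hc : G.Normal c.hom) (ha : G.Normal a.hom) (hb : G.Normal b.hom)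
    (hs : s ≫ p = 𝟙 b) (hk1 : IsKer k.top p.top) (hk0 : IsKer k.bot p.bot) :
    IsKer (ND.I₁.map k).top (ND.I₁.map p).top ∧ IsKer (ND.I₁.map k).bot (ND.I₁.map p).bot := by
  have hιc : IsKer (kernel.ι c.hom) c.hom := IsKer.kernel _
  have hιa : IsKer (kernel.ι a.hom) a.hom := IsKer.kernel _
  have hιb : IsKer (kernel.ι b.hom) b.hom := IsKer.kernel _
  obtain ⟨hKc, jc, hjc, hθc⟩ := ML S hpm h4 h5 hM htype1 hproto ND c hc hιc
  obtain ⟨hKa, ja, hja, hθa⟩ := ML S hpm h4 h5 hM htype1 hproto ND a ha hιa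
  obtain ⟨hKb, jb, hjb, hθb⟩ := ML S hpm h4 h5 hM htype1 hproto ND b hb hιb
  have hst : s.top ≫ p.top = 𝟙 _ := congrArg ExtHom.top hs
  have hkw := k.w
  have hpw := p.w
  have hsw := s.w
  -- kernels
  obtain ⟨κk, hκk⟩ := hιa.ex (kernel.ι c.hom ≫ k.top) (by
    rw [Category.assoc, hkw, ← Category.assoc, hιc.w, zero_comp])
  obtain ⟨κp, hκp⟩ := hιb.ex (kernel.ι a.hom ≫ p.top) (by
    rw [Category.assoc, hpw, ← Category.assoc, hιa.w, zero_comp])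
  obtain ⟨κs, hκs⟩ := hιa.ex (kernel.ι b.hom ≫ s.top) (by
    rw [Category.assoc, hsw, ← Category.assoc, hιb.w, zero_comp])
  have hsp : κs ≫ κp = 𝟙 _ := by
    apply hιb.mono
    rw [Category.assoc, hκp, reassoc_of% hκs, hst, Category.comp_id, Category.id_comp]
  have hκ : IsKer κk κp := by
    refine ⟨?_, ?_, ?_⟩
    · apply hιb.mono
      rw [Category.assoc, hκp, reassoc_of% hκk, hk1.w, comp_zero, zero_comp]
    · intro X x y hxy
      apply hιc.mono
      apply hk1.mono
      rw [Category.assoc, Category.assoc, ← hκk, reassoc_of% hxy]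
    · intro X x hx
      obtain ⟨z, hz⟩ := hk1.ex (x ≫ kernel.ι a.hom) (by
        rw [Category.assoc, ← hκp, reassoc_of% hx, zero_comp])
      obtain ⟨z', hz'⟩ := hιc.ex z (by
        apply hk0.mono
        rw [Category.assoc, ← hkw, reassoc_of% hz, hιa.w, comp_zero, zero_comp])
      refine ⟨z', hιa.mono _ _ ?_⟩
      rw [Category.assoc, hκk, reassoc_of% hz', hz]
  have hFr : IsKer (S.Fr.map κk) (S.Fr.map κp) := FrKer S hproto hκ κs hsp hKa hKb
  have nat : ∀ {x y : ExtObj G.E} (φ : x ⟶ y) {Kx Ky : 𝒞} {ιx : Kx ⟶ x.dom} {ιy : Ky ⟶ y.dom}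
      {jx : S.Fr.obj Kx ⟶ (ND.I₁.obj x).dom} {jy : S.Fr.obj Ky ⟶ (ND.I₁.obj y).dom}
      (hx : S.θ.app Kx ≫ jx = ιx ≫ (ND.η₁.app x).top)
      (hy : S.θ.app Ky ≫ jy = ιy ≫ (ND.η₁.app y).top) (κ : Kx ⟶ Ky) (hKx : G.inX Kx)
      (hκ : κ ≫ ιy = ιx ≫ φ.top), S.Fr.map κ ≫ jy = jx ≫ (ND.I₁.map φ).top := by
    intro x y φ Kx Ky ιx ιy jx jy hx hy κ hKx hκ
    have : Epi (S.θ.app Kx) := E_epi G h4 hM _ (G.F_sub_E _ (S.θ_mem _ hKx))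
    have hn : κ ≫ S.θ.app Ky = S.θ.app Kx ≫ S.Fr.map κ := S.θ.naturality κ
    have he := e_top ND φ
    apply (cancel_epi (S.θ.app Kx)).1
    calc S.θ.app Kx ≫ S.Fr.map κ ≫ jy = (S.θ.app Kx ≫ S.Fr.map κ) ≫ jy :=
          (Category.assoc _ _ _).symm
      _ = (κ ≫ S.θ.app Ky) ≫ jy := congrArg (· ≫ jy) hn.symm
      _ = κ ≫ S.θ.app Ky ≫ jy := Category.assoc _ _ _
      _ = κ ≫ ιy ≫ (ND.η₁.app y).top := congrArg (κ ≫ ·) hy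
      _ = (κ ≫ ιy) ≫ (ND.η₁.app y).top := (Category.assoc _ _ _).symm
      _ = (ιx ≫ φ.top) ≫ (ND.η₁.app y).top := congrArg (· ≫ (ND.η₁.app y).top) hκ
      _ = ιx ≫ φ.top ≫ (ND.η₁.app y).top := Category.assoc _ _ _
      _ = ιx ≫ (ND.η₁.app x).top ≫ (ND.I₁.map φ).top := congrArg (ιx ≫ ·) he
      _ = (ιx ≫ (ND.η₁.app x).top) ≫ (ND.I₁.map φ).top := (Category.assoc _ _ _).symm
      _ = (S.θ.app Kx ≫ jx) ≫ (ND.I₁.map φ).top := congrArg (· ≫ (ND.I₁.map φ).top) hx.symm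
      _ = S.θ.app Kx ≫ jx ≫ (ND.I₁.map φ).top := Category.assoc _ _ _
  have natk := nat k hθc hθa κk hKc hκk
  have natp := nat p hθa hθb κp hKa hκp
  -- bottom
  have hbot : IsKer (ND.I₁.map k).bot (ND.I₁.map p).bot := by
    have ia := ND.bot_iso a
    have ib := ND.bot_iso b
    have ic := ND.bot_iso c
    have h1 : IsKer (k.bot ≫ (ND.η₁.app a).bot) (ND.I₁.map p).bot :=
      hk0.of_pb (IsPullback.of_horiz_isIso ⟨(e_bot ND p).symm⟩)
    rw [e_bot ND k] at h1
    have h2 := h1.iso_comp (inv (ND.η₁.app c).bot)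
    rwa [IsIso.inv_hom_id_assoc] at h2
  refine ⟨?_, hbot⟩
  have hs' : ND.I₁.map s ≫ ND.I₁.map p = 𝟙 _ := by rw [← ND.I₁.map_comp, hs, ND.I₁.map_id]
  obtain ⟨k', hk'⟩ : ∃ k', k' = ND.I₁.map k := ⟨_, rfl⟩
  obtain ⟨p', hp'⟩ : ∃ p', p' = ND.I₁.map p := ⟨_, rfl⟩
  rw [← hk'] at natk hbot ⊢
  rw [← hp'] at natp hbot hs' ⊢
  have hkp' : k'.top ≫ p'.top = 0 := by
    have h0 : k ≫ p = 0 := ext_hom_ext hk1.w hk0.w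
    have : k' ≫ p' = 0 := by rw [hk', hp', ← ND.I₁.map_comp, h0]; exact I₁_zero ND c b
    exact congrArg ExtHom.top this
  have hkw' := k'.w
  have hpw' := p'.w
  have hm : IsKer (kernel.ι p'.top) p'.top := IsKer.kernel _
  obtain ⟨h, hh⟩ := hbot.ex (kernel.ι p'.top ≫ (ND.I₁.obj a).hom) (by
    rw [Category.assoc, ← hpw', ← Category.assoc, hm.w, zero_comp])
  have hhE : G.E h := DK h4 h5 p' (ND.I₁.map s) hs' hm hbot h hh
  obtain ⟨l, hl⟩ := hm.ex k'.top hkp'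
  have hlh : l ≫ h = (ND.I₁.obj c).hom := by
    apply hbot.mono
    rw [Category.assoc, hh, reassoc_of% hl, hkw']
  have hli : IsIso l := by
    refine short_five G hpm hM (ND.I₁.obj c).mem hhE l hlh hjc ?_
    refine ⟨by rw [Category.assoc, hlh, hjc.w], ?_, ?_⟩
    · intro X x y hxy
      apply hFr.mono
      apply hja.mono
      rw [Category.assoc, Category.assoc, natk, ← hl]
      have := congrArg (· ≫ kernel.ι p'.top) hxy
      simpa only [Category.assoc] using this
    · intro X x hx
      obtain ⟨z, hz⟩ := hja.ex (x ≫ kernel.ι p'.top) (by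
        rw [Category.assoc, ← hh, reassoc_of% hx, zero_comp])
      obtain ⟨z', hz'⟩ := hFr.ex z (by
        apply hjb.mono
        rw [Category.assoc, natp, reassoc_of% hz, hm.w, comp_zero, zero_comp])
      refine ⟨z', hm.mono _ _ ?_⟩
      rw [Category.assoc, Category.assoc, hl, ← natk, reassoc_of% hz', hz]
  rw [← hl]
  exact hm.iso_comp l

lemma part2 {N : MorphismProperty 𝒞} (ND : Normalization G.E N)
    {c a b : ExtObj G.E} (k : c ⟶ a) (p : a ⟶ b) (hk1 : IsKer k.top p.top)
    (hk : IsKer (ND.I₁.map k).top (ND.I₁.map p).top) : IsKer (rad1map ND k) (rad1map ND p) := by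
  have hc : IsKer (kernel.ι (ND.η₁.app c).top) (ND.η₁.app c).top := IsKer.kernel _
  have ha : IsKer (kernel.ι (ND.η₁.app a).top) (ND.η₁.app a).top := IsKer.kernel _
  have hb : IsKer (kernel.ι (ND.η₁.app b).top) (ND.η₁.app b).top := IsKer.kernel _
  have rk := rad_ι ND k
  have rp := rad_ι ND p
  refine ⟨?_, ?_, ?_⟩
  · apply hb.mono
    rw [Category.assoc, rp, reassoc_of% rk]
    exact (congrArg (_ ≫ ·) hk1.w).trans (comp_zero.trans zero_comp.symm)
  · intro X x y hxy
    apply hc.mono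
    apply hk1.mono
    have := congrArg (· ≫ kernel.ι (ND.η₁.app a).top) hxy
    simp only [Category.assoc] at this
    rw [rk] at this
    refine (Category.assoc _ _ _).trans (this.trans (Category.assoc _ _ _).symm)
  · intro X x hx
    have h0 : (x ≫ kernel.ι (ND.η₁.app a).top) ≫ p.top = 0 := by
      refine (Category.assoc _ _ _).trans ?_
      refine (congrArg (x ≫ ·) rp.symm).trans ?_
      refine (Category.assoc _ _ _).symm.trans ?_
      rw [hx, zero_comp]
    obtain ⟨z, hz⟩ := hk1.ex _ h0
    obtain ⟨z', hz'⟩ := hc.ex z (by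
      apply hk.mono
      refine (Category.assoc _ _ _).trans ?_
      refine (congrArg (z ≫ ·) (e_top ND k).symm).trans ?_
      refine (Category.assoc _ _ _).symm.trans ?_
      rw [hz, Category.assoc, ha.w, comp_zero, zero_comp])
    refine ⟨z', ha.mono _ _ ?_⟩
    rw [Category.assoc, rk]
    refine (Category.assoc _ _ _).symm.trans ?_
    exact (congrArg (· ≫ k.top) hz').trans hz

lemma rad_split {N : MorphismProperty 𝒞} (ND : Normalization G.E N)
    {a b : ExtObj G.E} (p : a ⟶ b) (s : b ⟶ a) (hs : s ≫ p = 𝟙 b) :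
    rad1map ND s ≫ rad1map ND p = 𝟙 _ := by
  have hb : IsKer (kernel.ι (ND.η₁.app b).top) (ND.η₁.app b).top := IsKer.kernel _
  have hst : s.top ≫ p.top = 𝟙 _ := congrArg ExtHom.top hs
  have rs := rad_ι ND s
  have rp := rad_ι ND p
  apply hb.mono
  rw [Category.assoc, rp, reassoc_of% rs, Category.id_comp]
  exact (congrArg (_ ≫ ·) hst).trans (Category.comp_id _)

end Final

end RadProof

/-- in a composite of closed Galois structures as in the paper, for a
`Γ`-normal extension `f`, the radical `[f]_{Γ'',1}` (kernel of the domain component of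
the unit of the normalisation of `Ext_ℰ(𝒞)` onto `NExt_{Γ''}(𝒞)` at `f`) coincides, as a
subobject of the domain of `f`, with `[Ker f]_{Γ'',0}` (the kernel of the unit of the
composite reflection at `Ker f`).  Consequently `[−]_{Γ'',1}` restricted to `NExt_Γ(𝒞)`
is protoadditive, and hence so is the reflector `F₁` of `NExt_Γ(𝒞)` onto
`NExt_{Γ''}(𝒞)` (the restriction of `I₁''`). -/
theorem radical_of_normal_extension
    {𝒞 : Type u} [Category.{v} 𝒞] [HasZeroMorphisms 𝒞] [HasZeroObject 𝒞]
    [HasFiniteLimits 𝒞]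
    (G : GaloisStructure 𝒞) (S : SecondStructure G)
    (hpm : ProtomodularCat 𝒞)
    (h4 : AxE4 G.E) (h5 : AxE5 G.E) (hM : AxM G.E)
    (htype1 : PreservesType1 G.E G.I)
    (hproto : ProtoadditiveOn G.inX S.Fr)
    (ND : Normalization G.E (fun _ _ f => S.NormalComp f))
    (f : ExtObj G.E) (hf : G.Normal f.hom) :
    (∃ e : kernel ((ND.η₁.app f).top) ≅ kernel (S.unit (kernel f.hom)),
      e.hom ≫ (kernel.ι (S.unit (kernel f.hom)) ≫ kernel.ι f.hom) =
        kernel.ι ((ND.η₁.app f).top)) ∧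
    (∀ {k' a' b' : ExtObj G.E} (k : k' ⟶ a') (p : a' ⟶ b') (s : b' ⟶ a'),
      G.Normal k'.hom → G.Normal a'.hom → G.Normal b'.hom →
      s ≫ p = 𝟙 b' → ∀ (hk : k ≫ p = 0),
      Nonempty (IsLimit (KernelFork.ofι k hk)) →
      ((∃ h0 : rad1map ND k ≫ rad1map ND p = 0,
          Nonempty (IsLimit (KernelFork.ofι (rad1map ND k) h0)) ∧
          ∃ σ : kernel ((ND.η₁.app b').top) ⟶ kernel ((ND.η₁.app a').top),
            σ ≫ rad1map ND p = 𝟙 _) ∧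
        (∃ h1 : ND.I₁.map k ≫ ND.I₁.map p = 0,
          Nonempty (IsLimit (KernelFork.ofι (ND.I₁.map k) h1)) ∧
          ∃ τ : ND.I₁.obj b' ⟶ ND.I₁.obj a',
            τ ≫ ND.I₁.map p = 𝟙 _))) := by
  refine ⟨RadProof.part1 S hpm h4 h5 hM htype1 hproto ND f hf, ?_⟩
  intro k' a' b' k p s hk' ha' hb' hs hk hlim
  obtain ⟨h1, h0⟩ := RadProof.extKer_comp h4 h5 (RadProof.IsKer.of_lim hk hlim) s hs
  obtain ⟨t1, t0⟩ := RadProof.part3 S hpm h4 h5 hM htype1 hproto ND k p s hk' ha' hb' hs h1 h0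
  have r := RadProof.part2 ND k p h1 t1
  have q := RadProof.extKer t1 t0
  exact ⟨⟨r.w, r.lim r.w, rad1map ND s, RadProof.rad_split ND p s hs⟩,
    ⟨q.w, q.lim q.w, ND.I₁.map s, by rw [← ND.I₁.map_comp, hs, ND.I₁.map_id]⟩⟩
end

section
/- Let Γ'' be a composite of closed Galois structures Γ : (𝒞, ℰ) → (𝒳, ℱ) and Γ' : (𝒳, ℱ) → (𝒴, 𝒢), with 𝒞 pointed protomodular, (𝒞, ℰ) satisfying (E4), (E5), (M), I preserving pullbacks of type (1) and the second reflector protoadditive. Let 0 → ι(A) → P →^f Q → 0 be a short exact sequence in Ext_ℰ(𝒞), where A is an object of 𝒞, ι(A) denotes the extension A → 0, f is a double ℰ-extension (f ∈ ℰ¹), P is an ℰ-extension and Q is a Γ-normal extension. Then: (i) applying the kernel functor yields a short exact sequence 0 → A → Ker(P) → Ker(Q) → 0 in 𝒞, with Ker(f) ∈ ℰ and Ker(Q) ∈ 𝒳; (ii) the closure of ι(A) in P with respect to the subcategory NExt_{Γ''}(𝒞) equals ι applied to the closure of A in Ker(P) with respect to 𝒴, i.e. cl^{NExt_{Γ''}(𝒞)}_P(ι(A))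 = ι( cl^𝒴_{Ker(P)}(A) ). -/
open CategoryTheory Limits

universe v u

section Closure

variable {𝒞 : Type u} [Category.{v} 𝒞] [HasZeroMorphisms 𝒞] [HasFiniteLimits 𝒞]

/-- The inclusion `[p]_{Γ,1} ⟶ Ker p` of the radical of an extension into its kernel
(`[p]_{Γ,1}` is the kernel of the domain component of the normalisation unit). -/
noncomputable def radOneToKer {E N : MorphismProperty 𝒞} (ND : Normalization E N)
    (p : ExtObj E) : kernel ((ND.η₁.app p).top) ⟶ kernel p.hom :=
  kernel.lift p.hom (kernel.ι ((ND.η₁.app p).top)) (by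
    haveI := ND.bot_iso p
    have hw : (ND.η₁.app p).top ≫ (ND.I₁.obj p).hom = p.hom ≫ (ND.η₁.app p).bot := by
      simpa using (ND.η₁.app p).w
    rw [← cancel_mono ((ND.η₁.app p).bot), Category.assoc, ← hw,
      ← Category.assoc, kernel.condition, zero_comp, zero_comp])

variable [HasCokernels 𝒞] {G : GaloisStructure 𝒞}

/-- The closure operator associated with the composite reflection onto `𝒴`: for a
(normal mono)morphism `k : K ⟶ A`, its closure is the preimage under `coker k` of the
kernel of the unit of the composite reflection `F ∘ I` at `Coker k`, i.e.
`Ker( unit''_{Coker k} ∘ coker k )`. -/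
noncomputable def clY (S : SecondStructure G) {K A : 𝒞} (k : K ⟶ A) : 𝒞 :=
  kernel (cokernel.π k ≫ S.unit (cokernel k))

/-- The inclusion of the closure into the ambient object. -/
noncomputable def clYι (S : SecondStructure G) {K A : 𝒞} (k : K ⟶ A) :
    clY S k ⟶ A :=
  kernel.ι (cokernel.π k ≫ S.unit (cokernel k))

/-- The Galois group `Gal_{Γ''}(q, 0) = [Dom q]_{Γ'',0} ∩ Ker q` of an extension with
respect to the composite Galois structure `Γ''`. -/
noncomputable def galObjComp (S : SecondStructure G) (a : ExtObj G.E) : 𝒞 :=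
  pullback (kernel.ι (S.unit a.dom)) (kernel.ι a.hom)

end Closure

section Helpers

theorem ESlice_id_top {𝒟 : Type u} [Category.{v} 𝒟] {E : MorphismProperty 𝒟} {B : 𝒟}
    (g : ESliceObj E B) : ESliceHom.top (𝟙 g) = 𝟙 g.dom := rfl

theorem ESlice_comp_top {𝒟 : Type u} [Category.{v} 𝒟] {E : MorphismProperty 𝒟} {B : 𝒟}
    {g h k : ESliceObj E B} (φ : g ⟶ h) (ψ : h ⟶ k) :
    ESliceHom.top (φ ≫ ψ) = ESliceHom.top φ ≫ ESliceHom.top ψ := rfl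

theorem ESlice_ext {𝒟 : Type u} [Category.{v} 𝒟] {E : MorphismProperty 𝒟} {B : 𝒟}
    {g h : ESliceObj E B} (φ ψ : g ⟶ h) (e : ESliceHom.top φ = ESliceHom.top ψ) : φ = ψ :=
  ESliceHom.ext e

theorem ESlice_isIso {𝒟 : Type u} [Category.{v} 𝒟] {E : MorphismProperty 𝒟} {B : 𝒟}
    {g h : ESliceObj E B} (φ : g ⟶ h) (hφ : IsIso (ESliceHom.top φ)) : IsIso φ := by
  refine ⟨⟨⟨inv (ESliceHom.top φ), ?_⟩, ?_, ?_⟩⟩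
  · rw [IsIso.inv_comp_eq]; exact φ.w.symm
  · apply ESlice_ext; rw [ESlice_comp_top]; exact IsIso.hom_inv_id _
  · apply ESlice_ext; rw [ESlice_comp_top]; exact IsIso.inv_hom_id _

theorem ESlice_top_isIso {𝒟 : Type u} [Category.{v} 𝒟] {E : MorphismProperty 𝒟} {B : 𝒟}
    {g h : ESliceObj E B} (φ : g ⟶ h) (hφ : IsIso φ) : IsIso (ESliceHom.top φ) :=
  ⟨⟨ESliceHom.top (inv φ), by rw [← ESlice_comp_top, IsIso.hom_inv_id]; rfl,
    by rw [← ESlice_comp_top, IsIso.inv_hom_id]; rfl⟩⟩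

theorem monadic_reflects {C : Type*} {D : Type*} [Category C] [Category D] (R : D ⥤ C)
    (h : Nonempty (MonadicRightAdjoint R)) {X Y : D} (φ : X ⟶ Y) (hφ : IsIso (R.map φ)) :
    IsIso φ := by
  obtain ⟨h⟩ := h
  have : R.ReflectsIsomorphisms :=
    reflectsIsomorphisms_of_iso (Monad.comparisonForget (monadicAdjunction R))
  exact isIso_of_reflects_iso φ R

theorem monadic_coeq {C D : Type u} [Category.{v} C] [Category.{v} D] (R : D ⥤ C)
    (h : Nonempty (MonadicRightAdjoint R)) {X Y : D} (f g : X ⟶ Y) {Z : C} (π : R.obj Y ⟶ Z)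
    (t : IsSplitCoequalizer (R.map f) (R.map g) π) :
    ∃ (M : D) (p : Y ⟶ M), f ≫ p = g ≫ p ∧
      (∀ (W : D) (k : Y ⟶ W), f ≫ k = g ≫ k → ∃ l, p ≫ l = k) ∧
      ∃ e : Z ≅ R.obj M, π ≫ e.hom = R.map p := by
  obtain ⟨h⟩ := h
  have : R.IsSplitPair f g := ⟨⟨Z, π, ⟨t⟩⟩⟩
  let _ := Monad.createsGSplitCoequalizersOfMonadic R f g
  have : HasColimit (parallelPair f g ⋙ R) :=
    have : HasColimit (parallelPair (R.map f) (R.map g)) := hasCoequalizer_of_hasSplitCoequalizer _ _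
    hasColimit_of_iso (F := parallelPair (R.map f) (R.map g)) (diagramIsoParallelPair _)
  have : HasCoequalizer f g := hasColimit_of_created (parallelPair f g) R
  have : PreservesColimit (parallelPair f g) R := inferInstance
  refine ⟨coequalizer f g, coequalizer.π f g, coequalizer.condition f g, ?_, ?_⟩
  · intro W k hk
    exact ⟨coequalizer.desc k hk, coequalizer.π_desc k hk⟩
  · have h2 := isColimitOfHasCoequalizerOfPreservesColimit R f g
    refine ⟨t.isCoequalizer.coconePointUniqueUpToIso h2, ?_⟩
    exact t.isCoequalizer.comp_coconePointUniqueUpToIso_hom h2 WalkingParallelPair.one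

variable {𝒞 : Type u} [Category.{v} 𝒞]

theorem E_of_pb {G : GaloisStructure 𝒞} {X Y Z P : 𝒞} {p₁ : P ⟶ X} {p₂ : P ⟶ Y}
    {f : X ⟶ Z} {g : Y ⟶ Z} (h : IsPullback p₁ p₂ f g) (hg : G.E g) : G.E p₁ := by
  obtain ⟨P', q₁, q₂, h', hq⟩ := G.E2 f g hg
  have : p₁ = (h.isoIsPullback _ _ h').hom ≫ q₁ := by simp
  rw [this]
  exact G.E3 _ _ (G.E1 _ inferInstance) hq

theorem E_of_split {G : GaloisStructure 𝒞} (h4 : AxE4 G.E) {X Y : 𝒞} (g : X ⟶ Y) (s : Y ⟶ X)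
    (h : s ≫ g = 𝟙 Y) : G.E g :=
  h4 s g (by rw [h]; exact G.E1 _ inferInstance)

theorem exists_pbFunctor [HasFiniteLimits 𝒞] {G : GaloisStructure 𝒞} {A B : 𝒞} (f : A ⟶ B) :
    Nonempty (PullbackFunctorAlong G.E f) :=
  ⟨{ R :=
      { obj := fun g => ⟨pullback g.hom f, pullback.snd g.hom f,
          E_of_pb (IsPullback.of_hasPullback g.hom f).flip g.mem⟩
        map := fun {g h} φ => ⟨pullback.lift (pullback.fst g.hom f ≫ ESliceHom.top φ)
          (pullback.snd g.hom f) (by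
            rw [Category.assoc, ESliceHom.w φ, pullback.condition]),
          pullback.lift_snd _ _ _⟩
        map_id := fun g => by
          apply ESlice_ext
          apply pullback.hom_ext <;> simp [ESlice_id_top, pullback.lift_fst, pullback.lift_snd]
        map_comp := fun φ ψ => by
          apply ESlice_ext
          apply pullback.hom_ext <;> simp [ESlice_comp_top, pullback.lift_fst, pullback.lift_snd, pullback.lift_fst_assoc, pullback.lift_snd_assoc] }
     top := fun g => pullback.fst g.hom f
     isPB := fun g => IsPullback.of_hasPullback g.hom f
     nat := fun φ => pullback.lift_fst _ _ _ }⟩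

theorem E_conservative [HasFiniteLimits 𝒞] {G : GaloisStructure 𝒞} (hM : AxM G.E)
    {A B M P : 𝒞} {a : P ⟶ M} {b : P ⟶ A} {m : M ⟶ B} {f : A ⟶ B}
    (h : IsPullback a b m f) (hm : G.E m) (hf : G.E f) (hb : IsIso b) : IsIso m := by
  obtain ⟨PF⟩ := exists_pbFunctor (G := G) f
  let m' : ESliceObj G.E B := ⟨M, m, hm⟩
  let o' : ESliceObj G.E B := ⟨B, 𝟙 B, G.E1 _ inferInstance⟩
  let φ : m' ⟶ o' := ⟨m, Category.comp_id m⟩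
  have h1 : IsIso (PF.R.obj m').hom := by
    have h2 := PF.isPB m'
    have : (PF.R.obj m').hom = (h2.isoIsPullback _ _ h).hom ≫ b := by simp
    rw [this]; infer_instance
  have h2 : IsIso (PF.R.obj o').hom := by
    have h3 := PF.isPB o'
    have : IsIso o'.hom := inferInstanceAs (IsIso (𝟙 B))
    exact h3.isIso_snd_of_isIso
  have h3 : IsIso (PF.R.map φ) := by
    apply ESlice_isIso
    have := ESliceHom.w (PF.R.map φ)
    have : IsIso (ESliceHom.top (PF.R.map φ) ≫ (PF.R.obj o').hom) := by rw [this]; exact h1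
    exact IsIso.of_isIso_comp_right _ (PF.R.obj o').hom
  exact ESlice_top_isIso φ (monadic_reflects PF.R (hM f hf PF) φ h3)

theorem E_strong [HasFiniteLimits 𝒞] {G : GaloisStructure 𝒞} (hM : AxM G.E) (h4 : AxE4 G.E)
    {A B C : 𝒞} (f' : A ⟶ C) (e : C ⟶ B) [Mono e] (hf : G.E (f' ≫ e)) : IsIso e := by
  have h := IsPullback.of_hasPullback e (f' ≫ e)
  refine E_conservative hM h (h4 _ _ hf) hf ?_
  refine ⟨⟨pullback.lift f' (𝟙 _) (by simp), ?_, pullback.lift_snd _ _ _⟩⟩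
  rw [← cancel_mono (pullback.snd e (f' ≫ e))]
  simp [pullback.lift_snd]

theorem E_epi [HasFiniteLimits 𝒞] {G : GaloisStructure 𝒞} (hM : AxM G.E) (h4 : AxE4 G.E)
    {A B : 𝒞} (f : A ⟶ B) (hf : G.E f) : Epi f := by
  refine ⟨fun {Z} u v huv => ?_⟩
  have := E_strong hM h4 (equalizer.lift f huv) (equalizer.ι u v) (by simpa using hf)
  rw [← cancel_epi (equalizer.ι u v)]
  exact equalizer.condition u v

theorem descent [HasZeroMorphisms 𝒞] [HasFiniteLimits 𝒞] {G : GaloisStructure 𝒞} (hM : AxM G.E)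
    (h4 : AxE4 G.E) {A B T X : 𝒞} (f : A ⟶ B) (hf : G.E f) (τ : T ⟶ A) (hτ : G.E τ)
    (x₁ : X ⟶ A) (x₂ : X ⟶ T) (hX : IsPullback x₁ x₂ f (τ ≫ f)) (a : X ⟶ T) (ha : a ≫ τ = x₁)
    (hunit : ∀ s : T ⟶ X, s ≫ x₁ = τ → s ≫ x₂ = 𝟙 T → s ≫ a = 𝟙 T)
    (hassoc : ∀ {W : 𝒞} (r s w : W ⟶ X), r ≫ x₂ = s ≫ x₂ → w ≫ x₁ = r ≫ x₁ →
      w ≫ x₂ = s ≫ a → w ≫ a = r ≫ a) :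
    ∃ (M : 𝒞) (m : M ⟶ B) (π : T ⟶ M), G.E m ∧ IsPullback π τ m f ∧ a ≫ π = x₂ ≫ π ∧
      ∀ (Z : 𝒞) (g : T ⟶ Z), a ≫ g = x₂ ≫ g → ∃ h : M ⟶ Z, π ≫ h = g := by
  obtain ⟨PF⟩ := exists_pbFunctor (G := G) f
  have hx₁ : G.E x₁ := E_of_pb hX (G.E3 _ _ hτ hf)
  let Yo : ESliceObj G.E B := ⟨T, τ ≫ f, G.E3 _ _ hτ hf⟩
  let Xo : ESliceObj G.E B := ⟨X, x₁ ≫ f, G.E3 _ _ hx₁ hf⟩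
  let Zo : ESliceObj G.E A := ⟨T, τ, hτ⟩
  let fm : Xo ⟶ Yo := ⟨a, by change a ≫ τ ≫ f = x₁ ≫ f; rw [← ha, Category.assoc]⟩
  let gm : Xo ⟶ Yo := ⟨x₂, hX.w.symm⟩
  have hY := PF.isPB Yo
  have hXo := PF.isPB Xo
  let i : (PF.R.obj Yo).dom ⟶ X := hX.lift (PF.R.obj Yo).hom (PF.top Yo) hY.w.symm
  have i1 : i ≫ x₁ = (PF.R.obj Yo).hom := hX.lift_fst _ _ _
  have i2 : i ≫ x₂ = PF.top Yo := hX.lift_snd _ _ _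
  let π₀ : PF.R.obj Yo ⟶ Zo := ⟨i ≫ a, by
    change (i ≫ a) ≫ τ = _
    rw [Category.assoc, ha, i1]⟩
  let rs : Zo ⟶ PF.R.obj Yo := ⟨hY.lift (𝟙 T) τ (Category.id_comp _), hY.lift_snd _ _ _⟩
  have rs1 : ESliceHom.top rs ≫ PF.top Yo = 𝟙 T := hY.lift_fst _ _ _
  have rs2 : ESliceHom.top rs ≫ (PF.R.obj Yo).hom = τ := hY.lift_snd _ _ _
  let ls : PF.R.obj Yo ⟶ PF.R.obj Xo := ⟨hXo.lift i (PF.R.obj Yo).hom (by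
    change i ≫ x₁ ≫ f = _
    rw [← Category.assoc, i1]), hXo.lift_snd _ _ _⟩
  have ls1 : ESliceHom.top ls ≫ PF.top Xo = i := hXo.lift_fst _ _ _
  let spl : IsSplitCoequalizer (PF.R.map fm) (PF.R.map gm) π₀ :=
    { rightSection := rs
      leftSection := ls
      condition := by
        apply ESlice_ext
        rw [ESlice_comp_top, ESlice_comp_top]
        change _ ≫ i ≫ a = _ ≫ i ≫ a
        rw [← Category.assoc, ← Category.assoc]
        refine hassoc _ (PF.top Xo) _ ?_ ?_ ?_
        · rw [Category.assoc, i2]; exact PF.nat gm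
        · rw [Category.assoc, Category.assoc, i1, ESliceHom.w, ESliceHom.w]
        · rw [Category.assoc, i2]; exact PF.nat fm
      rightSection_π := by
        apply ESlice_ext
        rw [ESlice_comp_top]
        change _ ≫ i ≫ a = 𝟙 T
        rw [← Category.assoc]
        apply hunit
        · rw [Category.assoc, i1, rs2]
        · rw [Category.assoc, i2, rs1]
      leftSection_bottom := by
        apply ESlice_ext
        rw [ESlice_comp_top, ESlice_id_top]
        apply hY.hom_ext
        · rw [Category.assoc, PF.nat, ← Category.assoc, ls1, Category.id_comp]; exact i2
        · rw [Category.assoc, ESliceHom.w, ESliceHom.w, Category.id_comp]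
      leftSection_top := by
        apply ESlice_ext
        rw [ESlice_comp_top, ESlice_comp_top]
        apply hY.hom_ext
        · rw [Category.assoc, PF.nat, ← Category.assoc, ls1, Category.assoc, rs1, Category.comp_id]
        · rw [Category.assoc, ESliceHom.w, ESliceHom.w, Category.assoc, rs2]
          exact (ESliceHom.w π₀).symm }
  obtain ⟨M, p, hp, hu, e, he⟩ := monadic_coeq PF.R (hM f hf PF) fm gm π₀ spl
  refine ⟨M.dom, M.hom, ESliceHom.top p, M.mem, ?_, congrArg ESliceHom.top hp, ?_⟩
  · have hPM := PF.isPB M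
    have e1 : ESliceHom.top e.hom ≫ PF.top M = ESliceHom.top p := by
      have : e.hom = rs ≫ PF.R.map p := by
        have h1 : rs ≫ π₀ = 𝟙 _ := spl.rightSection_π
        rw [← he, ← Category.assoc, h1, Category.id_comp]
      rw [this, ESlice_comp_top, Category.assoc, PF.nat, ← Category.assoc, rs1, Category.id_comp]
    have : IsIso (ESliceHom.top e.hom) := ESlice_top_isIso _ inferInstance
    refine IsPullback.of_iso hPM (asIso (ESliceHom.top e.hom)).symm (Iso.refl _) (Iso.refl _)
      (Iso.refl _) ?_ ?_ ?_ ?_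
    · simp [← e1]
    · have := ESliceHom.w e.hom
      simpa [Zo] using this
    · simp
    · simp
  · intro Z g hg
    let W : ESliceObj G.E B := ⟨B ⨯ Z, prod.fst, E_of_split h4 _ (prod.lift (𝟙 _) 0)
      (prod.lift_fst _ _)⟩
    let k : Yo ⟶ W := ⟨prod.lift (τ ≫ f) g, prod.lift_fst _ _⟩
    obtain ⟨l, hl⟩ := hu W k (by
      apply ESlice_ext
      rw [ESlice_comp_top, ESlice_comp_top]
      change a ≫ prod.lift (τ ≫ f) g = x₂ ≫ prod.lift (τ ≫ f) g
      apply Limits.prod.hom_ext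
      · rw [Category.assoc, Category.assoc, prod.lift_fst, ← Category.assoc, ha, hX.w]
      · rw [Category.assoc, Category.assoc, prod.lift_snd, hg])
    refine ⟨ESliceHom.top l ≫ prod.snd, ?_⟩
    have h1 := congrArg ESliceHom.top hl
    rw [ESlice_comp_top] at h1
    rw [← Category.assoc, h1]
    exact prod.lift_snd _ _


/-- `k` is a kernel of `f`. -/
structure IsKer [HasZeroMorphisms 𝒞] {K A B : 𝒞} (k : K ⟶ A) (f : A ⟶ B) : Prop where
  w : k ≫ f = 0
  mono : Mono k
  lift : ∀ {X : 𝒞} (g : X ⟶ A), g ≫ f = 0 → ∃ l : X ⟶ K, l ≫ k = g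

section Ker
variable [HasZeroMorphisms 𝒞]

theorem IsKer.of_nonempty {K A B : 𝒞} {k : K ⟶ A} {f : A ⟶ B} {h : k ≫ f = 0}
    (hl : Nonempty (IsLimit (KernelFork.ofι k h))) : IsKer k f := by
  obtain ⟨hl⟩ := hl
  refine ⟨h, ⟨fun a b hab => Fork.IsLimit.hom_ext hl hab⟩, fun g hg => ?_⟩
  obtain ⟨l, hl'⟩ := KernelFork.IsLimit.lift' hl g hg
  exact ⟨l, hl'⟩

theorem IsKer.nonempty {K A B : 𝒞} {k : K ⟶ A} {f : A ⟶ B} (h : IsKer k f) :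
    Nonempty (IsLimit (KernelFork.ofι k h.w)) := by
  have := h.mono
  choose l hl using @IsKer.lift _ _ _ _ _ _ _ _ h
  exact ⟨KernelFork.IsLimit.ofι' k h.w (fun g hg => ⟨l g hg, hl g hg⟩)⟩

theorem isKer_kernel {A B : 𝒞} (f : A ⟶ B) [HasKernel f] : IsKer (kernel.ι f) f :=
  ⟨kernel.condition f, inferInstance, fun g hg => ⟨kernel.lift f g hg, kernel.lift_ι f g hg⟩⟩

theorem IsKer.precomp {K K' A B : 𝒞} {k : K ⟶ A} {f : A ⟶ B} (h : IsKer k f) (φ : K' ⟶ K)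
    [IsIso φ] : IsKer (φ ≫ k) f := by
  have := h.mono
  refine ⟨by rw [Category.assoc, h.w, comp_zero], inferInstance, fun g hg => ?_⟩
  obtain ⟨l, hl⟩ := h.lift g hg
  exact ⟨l ≫ inv φ, by simp [hl]⟩

theorem IsKer.unique {K K' A B : 𝒞} {k : K ⟶ A} {k' : K' ⟶ A} {f : A ⟶ B} (h : IsKer k f)
    (h' : IsKer k' f) : ∃ φ : K ⟶ K', IsIso φ ∧ φ ≫ k' = k := by
  have := h.mono
  have := h'.mono
  obtain ⟨l, hl⟩ := h'.lift k h.w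
  obtain ⟨l', hl'⟩ := h.lift k' h'.w
  refine ⟨l, ⟨l', ?_, ?_⟩, hl⟩
  · rw [← cancel_mono k]; simp [hl, hl']
  · rw [← cancel_mono k']; simp [hl, hl']

theorem IsKer.of_iso {K A A' B : 𝒞} {k : K ⟶ A} {f : A ⟶ B} (h : IsKer k f) (ψ : A' ⟶ A)
    [IsIso ψ] {k' : K ⟶ A'} {f' : A' ⟶ B} (hk : k' ≫ ψ = k) (hf : ψ ≫ f = f') :
    IsKer k' f' := by
  have := h.mono
  refine ⟨?_, ?_, fun g hg => ?_⟩
  · rw [← hf, ← Category.assoc, hk, h.w]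
  · rw [← hk] at this; exact mono_of_mono k' ψ
  · obtain ⟨l, hl⟩ := h.lift (g ≫ ψ) (by rw [Category.assoc, hf, hg])
    refine ⟨l, ?_⟩
    rw [← cancel_mono ψ, Category.assoc, hk, hl]

theorem IsKer.pb {K P X Y Z : 𝒞} {a : P ⟶ X} {b : P ⟶ Y} {c : X ⟶ Z} {d : Y ⟶ Z} {k : K ⟶ P}
    (h : IsPullback a b c d) (hk : IsKer k b) : IsKer (k ≫ a) c := by
  have := hk.mono
  refine ⟨?_, ⟨fun u v huv => ?_⟩, fun g hg => ?_⟩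
  · rw [Category.assoc, h.w, ← Category.assoc, hk.w, zero_comp]
  · rw [← cancel_mono k]
    apply h.hom_ext
    · simpa using huv
    · rw [Category.assoc, Category.assoc, hk.w, comp_zero, comp_zero]
  · obtain ⟨l, hl⟩ := hk.lift (h.lift g 0 (by rw [hg, zero_comp])) (h.lift_snd _ _ _)
    exact ⟨l, by rw [← Category.assoc, hl, h.lift_fst]⟩

theorem IsKer.pb_lift {K P X Y Z : 𝒞} {a : P ⟶ X} {b : P ⟶ Y} {c : X ⟶ Z} {d : Y ⟶ Z}
    {k : K ⟶ X} (h : IsPullback a b c d) (hk : IsKer k c) :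
    ∃ k' : K ⟶ P, k' ≫ a = k ∧ k' ≫ b = 0 ∧ IsKer k' b := by
  have := hk.mono
  have e1 := h.lift_fst k 0 (by rw [hk.w, zero_comp])
  have e2 := h.lift_snd k 0 (by rw [hk.w, zero_comp])
  refine ⟨h.lift k 0 (by rw [hk.w, zero_comp]), e1, e2, e2, ?_, fun g hg => ?_⟩
  · rw [← e1] at this; exact mono_of_mono _ a
  · obtain ⟨l, hl⟩ := hk.lift (g ≫ a) (by
      rw [Category.assoc, h.w, ← Category.assoc, hg, zero_comp])
    refine ⟨l, ?_⟩
    apply h.hom_ext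
    · rw [Category.assoc, e1, hl]
    · rw [Category.assoc, e2, hg, comp_zero]

theorem split_five (hpm : ProtomodularCat 𝒞) {K A B A' : 𝒞} {k : K ⟶ A} {f : A ⟶ B}
    {s : B ⟶ A} {k' : K ⟶ A'} {f' : A' ⟶ B} (v : A ⟶ A') (hs : s ≫ f = 𝟙 B)
    (hk : IsKer k f) (hk' : IsKer k' f') (h1 : k ≫ v = k') (h2 : v ≫ f' = f) : IsIso v :=
  hpm.2 k f s k' f' (s ≫ v) (𝟙 K) v (𝟙 B) hs (by rw [Category.assoc, h2, hs]) hk.w hk'.w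
    hk.nonempty hk'.nonempty (by rw [Category.id_comp, h1]) (by rw [Category.comp_id, h2])
    inferInstance inferInstance

theorem joint_epi [HasFiniteLimits 𝒞] (hpm : ProtomodularCat 𝒞) {K A B Z : 𝒞} {k : K ⟶ A}
    {f : A ⟶ B} {s : B ⟶ A} (hs : s ≫ f = 𝟙 B) (hk : IsKer k f) (x y : A ⟶ Z)
    (h1 : k ≫ x = k ≫ y) (h2 : s ≫ x = s ≫ y) : x = y := by
  have := hk.mono
  have hk0 : equalizer.lift k h1 ≫ equalizer.ι x y = k := equalizer.lift_ι _ _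
  have hs0 : equalizer.lift s h2 ≫ equalizer.ι x y = s := equalizer.lift_ι _ _
  have hk2 : IsKer (equalizer.lift k h1) (equalizer.ι x y ≫ f) := by
    refine ⟨by rw [← Category.assoc, hk0, hk.w], ?_, fun g hg => ?_⟩
    · rw [← hk0] at this; exact mono_of_mono _ (equalizer.ι x y)
    · obtain ⟨l, hl⟩ := hk.lift (g ≫ equalizer.ι x y) (by rw [Category.assoc, hg])
      refine ⟨l, ?_⟩
      rw [← cancel_mono (equalizer.ι x y), Category.assoc, hk0, hl]
  have : IsIso (equalizer.ι x y) :=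
    split_five hpm (s := equalizer.lift s h2) (equalizer.ι x y)
      (by rw [← Category.assoc, hs0, hs]) hk2 hk hk0 rfl
  rw [← cancel_epi (equalizer.ι x y)]
  exact equalizer.condition x y

theorem E_normal_epi [HasFiniteLimits 𝒞] {G : GaloisStructure 𝒞} (hpm : ProtomodularCat 𝒞)
    (hM : AxM G.E) (h4 : AxE4 G.E) {K A B Z : 𝒞} {k : K ⟶ A} {f : A ⟶ B} (hf : G.E f)
    (hk : IsKer k f) (g : A ⟶ Z) (hg : k ≫ g = 0) : ∃ h : B ⟶ Z, f ≫ h = g := by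
  have hR := IsPullback.of_hasPullback f f
  set p₁ := pullback.fst f f
  set p₂ := pullback.snd f f
  have hR' : IsPullback p₁ p₂ f (𝟙 A ≫ f) := by rw [Category.id_comp]; exact hR
  obtain ⟨M, m, π, hm, hpb, hc, hu⟩ := descent hM h4 f hf (𝟙 A) (G.E1 _ inferInstance) p₁ p₂
    hR' p₁ (Category.comp_id _) (fun s hs _ => hs) (fun r s w _ h2 _ => h2)
  have hmi : IsIso m := E_conservative hM hpb hm hf inferInstance
  have hgg : p₁ ≫ g = p₂ ≫ g := by
    obtain ⟨k', e1, e2, hk'⟩ := IsKer.pb_lift hR.flip hk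
    refine joint_epi hpm (s := hR.lift (𝟙 A) (𝟙 A) rfl) (hR.lift_fst _ _ _) hk' _ _ ?_ ?_
    · rw [← Category.assoc, ← Category.assoc, e1, e2, hg, zero_comp]
    · rw [← Category.assoc, ← Category.assoc, hR.lift_fst, hR.lift_snd]
  obtain ⟨h, hh⟩ := hu Z g hgg
  refine ⟨inv m ≫ h, ?_⟩
  have : f = π ≫ m := by rw [hpb.w, Category.id_comp]
  rw [this]; simp [hh]

theorem refl_ker (inZ : 𝒞 → Prop) (hiso : ∀ {X Y : 𝒞}, (X ≅ Y) → inZ X → inZ Y)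
    (L : 𝒞 → 𝒞) (η : ∀ C, C ⟶ L C) (hL : ∀ C, inZ (L C))
    (huniv : ∀ {C D : 𝒞}, inZ D → ∀ f : C ⟶ D, ∃! g : L C ⟶ D, η C ≫ g = f)
    {K A B : 𝒞} {k : K ⟶ A} {f : A ⟶ B} (hk : IsKer k f) (hA : inZ A) (hB : inZ B) :
    inZ K := by
  have := hk.mono
  obtain ⟨k', hk', -⟩ := huniv hA k
  have h0 : k' ≫ f = 0 := by
    apply (huniv hB (η K ≫ k' ≫ f)).unique rfl
    rw [← Category.assoc, hk', hk.w, comp_zero]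
  obtain ⟨r, hr⟩ := hk.lift k' h0
  have h1 : η K ≫ r = 𝟙 K := by
    rw [← cancel_mono k, Category.assoc, hr, hk', Category.id_comp]
  have h2 : r ≫ η K = 𝟙 _ := by
    apply (huniv (hL K) (η K)).unique
    · rw [← Category.assoc, h1, Category.id_comp]
    · exact Category.comp_id _
  exact hiso ⟨r, η K, h2, h1⟩ (hL K)

theorem unit_nat {G : GaloisStructure 𝒞} (S : SecondStructure G) {X Y : 𝒞} (f : X ⟶ Y) :
    f ≫ S.unit Y = S.unit X ≫ S.Fr.map (G.I.map f) := by
  have h1 := G.η.naturality f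
  have h2 := S.θ.naturality (G.I.map f)
  simp only [Functor.id_map, Functor.id_obj] at h1 h2
  unfold SecondStructure.unit
  rw [← Category.assoc, h1, Category.assoc, h2, Category.assoc]

theorem unit_univ {G : GaloisStructure 𝒞} (S : SecondStructure G) {C D : 𝒞} (hD : S.inY D)
    (f : C ⟶ D) : ∃! g : S.Fr.obj (G.I.obj C) ⟶ D, S.unit C ≫ g = f := by
  obtain ⟨g, hg, hgu⟩ := G.refl_univ (S.Y_sub_X _ hD) f
  obtain ⟨g', hg', hgu'⟩ := S.refl_univ (G.I_mem C) hD g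
  refine ⟨g', ?_, fun y hy => ?_⟩
  · unfold SecondStructure.unit; simp only; rw [Category.assoc]; erw [hg']; exact hg
  · apply hgu'
    apply hgu
    unfold SecondStructure.unit at hy
    simp only at hy ⊢
    rw [← hy, Category.assoc]

theorem inX_ker {G : GaloisStructure 𝒞} {K A B : 𝒞} {k : K ⟶ A} {f : A ⟶ B} (hk : IsKer k f)
    (hA : G.inX A) (hB : G.inX B) : G.inX K :=
  refl_ker G.inX G.inX_iso G.I.obj (fun C => G.η.app C) G.I_mem G.refl_univ hk hA hB

theorem inY_ker {G : GaloisStructure 𝒞} (S : SecondStructure G) {K A B : 𝒞} {k : K ⟶ A}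
    {f : A ⟶ B} (hk : IsKer k f) (hA : S.inY A) (hB : S.inY B) : S.inY K :=
  refl_ker S.inY S.inY_iso (fun C => S.Fr.obj (G.I.obj C)) (fun C => S.unit C)
    (fun C => S.Fr_mem _ (G.I_mem C)) (unit_univ S) hk hA hB

theorem normal_ker [HasFiniteLimits 𝒞] {G : GaloisStructure 𝒞} {K A B : 𝒞} {k : K ⟶ A}
    {f : A ⟶ B} (hk : IsKer k f) (hf : G.Normal f) : G.inX K := by
  have hR := IsPullback.of_hasPullback f f
  obtain ⟨k', -, -, hk'⟩ := IsKer.pb_lift hR.flip hk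
  have ht := hf.2 _ _ hR
  exact inX_ker (IsKer.pb ht hk') (G.I_mem _) (G.I_mem _)

theorem normalComp_ker [HasFiniteLimits 𝒞] {G : GaloisStructure 𝒞} (S : SecondStructure G)
    {K A B : 𝒞} {k : K ⟶ A} {f : A ⟶ B} (hk : IsKer k f) (hf : S.NormalComp f) : S.inY K := by
  have hR := IsPullback.of_hasPullback f f
  obtain ⟨k', -, -, hk'⟩ := IsKer.pb_lift hR.flip hk
  have ht := hf.2 _ _ hR
  exact inY_ker S (IsKer.pb ht hk') (S.Fr_mem _ (G.I_mem _)) (S.Fr_mem _ (G.I_mem _))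

theorem trivialComp_of_ker [HasFiniteLimits 𝒞] (hpm : ProtomodularCat 𝒞)
    {G : GaloisStructure 𝒞} (S : SecondStructure G) {K A B : 𝒞} {k : K ⟶ A} {f : A ⟶ B}
    {s : B ⟶ A} (hs : s ≫ f = 𝟙 B) (hk : IsKer k f)
    (hk' : IsKer (k ≫ S.unit A) (S.Fr.map (G.I.map f))) : S.TrivialComp f := by
  have hW := IsPullback.of_hasPullback (S.Fr.map (G.I.map f)) (S.unit B)
  obtain ⟨k₁, e1, e2, hk₁⟩ := IsKer.pb_lift hW hk'
  let c := hW.lift (S.unit A) f (unit_nat S f).symm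
  have c1 : c ≫ _ = S.unit A := hW.lift_fst _ _ _
  have c2 : c ≫ _ = f := hW.lift_snd _ _ _
  have : IsIso c := by
    refine split_five hpm c hs hk hk₁ ?_ c2
    apply hW.hom_ext
    · rw [Category.assoc, c1, e1]
    · rw [Category.assoc, c2, e2, hk.w]
  refine IsPullback.of_iso hW (asIso c).symm (Iso.refl _) (Iso.refl _) (Iso.refl _) ?_ ?_ ?_ ?_
  · simp [← c1]
  · simp [← c2]
  · simp
  · simp

end Ker
theorem exists_normal_quotient [HasZeroMorphisms 𝒞] [HasFiniteLimits 𝒞]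
    (G : GaloisStructure 𝒞) (S : SecondStructure G) (hpm : ProtomodularCat 𝒞)
    (h4 : AxE4 G.E) (h5 : AxE5 G.E) (hM : AxM G.E) (htype1 : PreservesType1 G.E G.I)
    (hproto : ProtoadditiveOn G.inX S.Fr) {K A B : 𝒞} {k : K ⟶ A} {q₀ : A ⟶ B}
    (hk : IsKer k q₀) (hN : G.Normal q₀) :
    ∃ (M : 𝒞) (m : M ⟶ B) (q : A ⟶ M), q ≫ m = q₀ ∧ S.NormalComp m ∧
      ∀ {X : 𝒞} (g : X ⟶ K), g ≫ k ≫ q = 0 → g ≫ S.θ.app K = 0 := by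
  have hq₀ : G.E q₀ := hN.1
  have hKX : G.inX K := normal_ker hk hN
  -- the kernel pair
  obtain ⟨R, p₁, p₂, hR⟩ : ∃ (R : 𝒞) (p₁ p₂ : R ⟶ A), IsPullback p₁ p₂ q₀ q₀ :=
    ⟨_, _, _, IsPullback.of_hasPullback q₀ q₀⟩
  obtain ⟨δ, δ1, δ2⟩ : ∃ δ : A ⟶ R, δ ≫ p₁ = 𝟙 A ∧ δ ≫ p₂ = 𝟙 A :=
    ⟨hR.lift (𝟙 A) (𝟙 A) rfl, hR.lift_fst _ _ _, hR.lift_snd _ _ _⟩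
  have hp₁ : G.E p₁ := E_of_pb hR hq₀
  obtain ⟨k', k'2, k'1, hk'⟩ := IsKer.pb_lift hR.flip hk
  have hkη : IsKer (k' ≫ G.η.app R) (G.I.map p₁) := IsKer.pb (hN.2 _ _ hR) hk'
  have hF : IsKer (S.Fr.map (k' ≫ G.η.app R)) (S.Fr.map (G.I.map p₁)) := by
    obtain ⟨_, h⟩ := hproto.preserves (k' ≫ G.η.app R) (G.I.map p₁) (G.I.map δ) hKX (G.I_mem _)
      (G.I_mem _) (by rw [← G.I.map_comp, δ1, G.I.map_id]) hkη.w hkη.nonempty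
    exact IsKer.of_nonempty h
  -- the trivialization
  obtain ⟨T, t₁, τ, hT⟩ : ∃ (T : 𝒞) (t₁ : T ⟶ _) (τ : T ⟶ A),
      IsPullback t₁ τ (S.Fr.map (G.I.map p₁)) (S.unit A) :=
    ⟨_, _, _, IsPullback.of_hasPullback _ _⟩
  obtain ⟨r, r1, r2⟩ : ∃ r : R ⟶ T, r ≫ t₁ = S.unit R ∧ r ≫ τ = p₁ :=
    ⟨hT.lift (S.unit R) p₁ (unit_nat S p₁).symm, hT.lift_fst _ _ _, hT.lift_snd _ _ _⟩
  obtain ⟨j, j1, j2, hj⟩ := IsKer.pb_lift hT hF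
  have hkr : k' ≫ r = S.θ.app K ≫ j := by
    apply hT.hom_ext
    · have h2 := S.θ.naturality (k' ≫ G.η.app R)
      simp only [Functor.id_map, Functor.id_obj] at h2
      rw [Category.assoc, Category.assoc, r1, j1]
      erw [← h2]
      simp [SecondStructure.unit]
    · rw [Category.assoc, Category.assoc, r2, j2, k'1, comp_zero]
  have hr : G.E r := h5 k' j p₁ τ r (S.θ.app K) r2 hkr.symm hk'.w hj.w hk'.nonempty hj.nonempty
    hp₁ (G.F_sub_E _ (S.θ_mem K hKX))
  have hrepi : Epi r := E_epi hM h4 r hr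
  have hτs : (δ ≫ r) ≫ τ = 𝟙 A := by rw [Category.assoc, r2, δ1]
  have hτ : G.E τ := E_of_split h4 τ (δ ≫ r) hτs
  -- the action
  obtain ⟨X, x₁, x₂, hX⟩ : ∃ (X : 𝒞) (x₁ : X ⟶ A) (x₂ : X ⟶ T), IsPullback x₁ x₂ q₀ (τ ≫ q₀) :=
    ⟨_, _, _, IsPullback.of_hasPullback _ _⟩
  obtain ⟨W, d, w₂, hW⟩ : ∃ (W : 𝒞) (d : W ⟶ X) (w₂ : W ⟶ R), IsPullback d w₂ x₂ r :=
    ⟨_, _, _, IsPullback.of_hasPullback _ _⟩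
  have hd : G.E d := E_of_pb hW hr
  have hdepi : Epi d := E_epi hM h4 d hd
  have hw : (d ≫ x₁) ≫ q₀ = (w₂ ≫ p₂) ≫ q₀ := by
    rw [Category.assoc, hX.w, Category.assoc, ← hR.w, ← r2, ← Category.assoc, hW.w]
    simp only [Category.assoc]
  obtain ⟨e, e1, e2⟩ : ∃ e : W ⟶ R, e ≫ p₁ = d ≫ x₁ ∧ e ≫ p₂ = w₂ ≫ p₂ :=
    ⟨hR.lift _ _ hw, hR.lift_fst _ _ _, hR.lift_snd _ _ _⟩
  obtain ⟨a, ha⟩ : ∃ a : X ⟶ T, d ≫ a = e ≫ r := by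
    refine E_normal_epi hpm hM h4 hd (isKer_kernel d) _ ?_
    have : kernel.ι d ≫ e = kernel.ι d ≫ w₂ := by
      apply hR.hom_ext
      · rw [Category.assoc, Category.assoc, e1, ← r2, ← Category.assoc w₂, ← hW.w]
        simp
      · rw [Category.assoc, Category.assoc, e2]
    rw [← Category.assoc, this, Category.assoc, ← hW.w, ← Category.assoc, kernel.condition,
      zero_comp]
  have haτ : a ≫ τ = x₁ := by
    rw [← cancel_epi d, ← Category.assoc, ha, Category.assoc, r2, e1]
  have act : ∀ {V : 𝒞} (x : V ⟶ X) (y y' : V ⟶ R), x ≫ x₂ = y ≫ r → y' ≫ p₁ = x ≫ x₁ →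
      y' ≫ p₂ = y ≫ p₂ → x ≫ a = y' ≫ r := by
    intro V x y y' h1 h2 h3
    have hv1 := hW.lift_fst x y h1
    have hv2 := hW.lift_snd x y h1
    have he : hW.lift x y h1 ≫ e = y' := by
      apply hR.hom_ext
      · rw [Category.assoc, e1, ← Category.assoc, hv1, h2]
      · rw [Category.assoc, e2, ← Category.assoc, hv2, h3]
    rw [← he, Category.assoc, ← ha, ← Category.assoc, hv1]
  have hunit : ∀ s : T ⟶ X, s ≫ x₁ = τ → s ≫ x₂ = 𝟙 T → s ≫ a = 𝟙 T := by
    intro s h1 h2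
    rw [← cancel_epi r, ← Category.assoc]
    rw [act (r ≫ s) (𝟙 R) (𝟙 R) (by simp [h2]) (by simp [h1, r2]) rfl]
    simp
  have hassoc : ∀ {V : 𝒞} (y s w : V ⟶ X), y ≫ x₂ = s ≫ x₂ → w ≫ x₁ = y ≫ x₁ →
      w ≫ x₂ = s ≫ a → w ≫ a = y ≫ a := by
    intro V y s w h1 h2 h3
    have hV := IsPullback.of_hasPullback (y ≫ x₂) r
    set ρ := pullback.fst (y ≫ x₂) r
    set ρ' := pullback.snd (y ≫ x₂) r
    have hρ : Epi ρ := E_epi hM h4 ρ (E_of_pb hV hr)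
    have hVw : ρ ≫ y ≫ x₂ = ρ' ≫ r := hV.w
    have hVs : ρ ≫ s ≫ x₂ = ρ' ≫ r := by rw [← h1, hVw]
    have aux : ∀ u : V ⟶ X, ρ ≫ u ≫ x₂ = ρ' ≫ r →
        ∃ z : _ ⟶ R, z ≫ p₁ = ρ ≫ u ≫ x₁ ∧ z ≫ p₂ = ρ' ≫ p₂ := by
      intro u hu
      have hh : (ρ ≫ u ≫ x₁) ≫ q₀ = (ρ' ≫ p₂) ≫ q₀ := by
        have := congrArg (· ≫ τ ≫ q₀) hu
        simp only [Category.assoc] at this ⊢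
        rw [hX.w, this, ← hR.w, ← r2, Category.assoc]
      exact ⟨hR.lift _ _ hh, hR.lift_fst _ _ _, hR.lift_snd _ _ _⟩
    obtain ⟨zy, zy1, zy2⟩ := aux y hVw
    obtain ⟨zs, zs1, zs2⟩ := aux s hVs
    have A1 := act (ρ ≫ y) ρ' zy (by rw [Category.assoc, hVw]) (by rw [zy1, Category.assoc]) zy2
    have A2 := act (ρ ≫ s) ρ' zs (by rw [Category.assoc, hVs]) (by rw [zs1, Category.assoc]) zs2
    have A3 := act (ρ ≫ w) zs zy (by rw [Category.assoc, h3, ← A2, Category.assoc])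
      (by rw [zy1, Category.assoc, h2]) (by rw [zy2, zs2])
    rw [← cancel_epi ρ, ← Category.assoc, A3, ← A1, Category.assoc]
  obtain ⟨M, m, π, hm, hπ, haπ, -⟩ := descent hM h4 q₀ hq₀ τ hτ x₁ x₂ hX a haτ hunit hassoc
  have hrπ : r ≫ π = p₂ ≫ δ ≫ r ≫ π := by
    have hh : p₂ ≫ q₀ = r ≫ τ ≫ q₀ := by rw [← Category.assoc, r2, hR.w]
    have hx1 := hX.lift_fst _ _ hh
    have hx2 := hX.lift_snd _ _ hh
    have := act (hX.lift _ _ hh) (𝟙 R) (p₂ ≫ δ) (by rw [hx2, Category.id_comp])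
      (by rw [hx1, Category.assoc, δ1, Category.comp_id])
      (by rw [Category.assoc, δ2, Category.comp_id, Category.id_comp])
    have h2 := congrArg (· ≫ π) this
    simp only [Category.assoc] at h2
    rw [← h2, haπ, ← Category.assoc, hx2]
  obtain ⟨q, hq⟩ : ∃ q : A ⟶ M, q = δ ≫ r ≫ π := ⟨_, rfl⟩
  rw [← hq] at hrπ
  have hqm : q ≫ m = q₀ := by
    rw [hq, Category.assoc, Category.assoc, hπ.w, ← Category.assoc r, r2, ← Category.assoc, δ1,
      Category.id_comp]
  have hqE : G.E q := h4 p₂ q (by rw [← hrπ]; exact G.E3 _ _ hr (E_of_pb hπ hq₀))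
  refine ⟨M, m, q, hqm, ⟨hm, ?_⟩, ?_⟩
  · intro Pm π₁ π₂ hPm
    have hvw : (τ ≫ q) ≫ m = π ≫ m := by rw [Category.assoc, hqm, hπ.w]
    obtain ⟨v, v1, v2⟩ : ∃ v : T ⟶ Pm, v ≫ π₁ = τ ≫ q ∧ v ≫ π₂ = π :=
      ⟨hPm.lift _ _ hvw, hPm.lift_fst _ _ _, hPm.lift_snd _ _ _⟩
    obtain ⟨s, s1⟩ : ∃ s : M ⟶ Pm, s ≫ π₁ = 𝟙 M :=
      ⟨hPm.lift (𝟙 M) (𝟙 M) rfl, hPm.lift_fst _ _ _⟩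
    have hv : IsPullback v τ π₁ q := by
      refine IsPullback.of_right (t := hPm.flip) ?_ v1
      rw [v2, hqm]
      exact hπ
    have hIv := htype1 v τ π₁ q s s1 (E_of_split h4 _ s s1) hqE hv
    have hc := isKer_kernel (G.I.map τ)
    have hc' := IsKer.pb hIv hc
    have hcX := inX_ker hc (G.I_mem _) (G.I_mem _)
    have hFc : IsKer (S.Fr.map (kernel.ι (G.I.map τ))) (S.Fr.map (G.I.map τ)) := by
      obtain ⟨_, h⟩ := hproto.preserves _ (G.I.map τ) (G.I.map (δ ≫ r)) hcX (G.I_mem _)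
        (G.I_mem _) (by rw [← G.I.map_comp, hτs, G.I.map_id]) hc.w hc.nonempty
      exact IsKer.of_nonempty h
    have hFc' : IsKer (S.Fr.map (kernel.ι (G.I.map τ) ≫ G.I.map v)) (S.Fr.map (G.I.map π₁)) := by
      obtain ⟨_, h⟩ := hproto.preserves _ (G.I.map π₁) (G.I.map s) hcX (G.I_mem _)
        (G.I_mem _) (by rw [← G.I.map_comp, s1, G.I.map_id]) hc'.w hc'.nonempty
      exact IsKer.of_nonempty h
    -- `τ` is trivial
    have hYR := S.Fr_mem _ (G.I_mem R)
    have hYT := S.Fr_mem _ (G.I_mem T)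
    obtain ⟨ρ, hρ, -⟩ := unit_univ S hYR t₁
    have hρ1 : S.Fr.map (G.I.map r) ≫ ρ = 𝟙 _ := by
      apply (unit_univ S hYR (S.unit R)).unique
      · rw [← Category.assoc, ← unit_nat, Category.assoc, hρ, r1]
      · exact Category.comp_id _
    have hρ2 : ρ ≫ S.Fr.map (G.I.map r) = 𝟙 _ := by
      apply (unit_univ S hYT (S.unit T)).unique
      · rw [← Category.assoc, hρ, ← cancel_epi r, ← Category.assoc, r1, unit_nat]
      · exact Category.comp_id _
    have hρi : IsIso ρ := ⟨⟨_, hρ2, hρ1⟩⟩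
    have hjT : IsKer (j ≫ S.unit T) (S.Fr.map (G.I.map τ)) := by
      refine hF.of_iso ρ ?_ ?_
      · rw [Category.assoc, hρ, j1]
      · rw [← r2, G.I.map_comp, S.Fr.map_comp, ← Category.assoc, hρ2, Category.id_comp]
    obtain ⟨φ, hφi, hφ⟩ := hjT.unique hFc
    have hjv := IsKer.pb hv hj
    refine trivialComp_of_ker hpm S s1 hjv ?_
    have : (j ≫ v) ≫ S.unit Pm = φ ≫ S.Fr.map (kernel.ι (G.I.map τ) ≫ G.I.map v) := by
      rw [Category.assoc, unit_nat, ← Category.assoc, ← hφ, S.Fr.map_comp, Category.assoc]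
    rw [this]
    exact hFc'.precomp φ
  · intro Y g hg
    have := hj.mono
    have h0 : (g ≫ k') ≫ r = 0 := by
      apply hπ.hom_ext
      · rw [Category.assoc, hrπ, Category.assoc, ← Category.assoc k', k'2, hg, zero_comp]
      · rw [Category.assoc, r2, Category.assoc, k'1, comp_zero, zero_comp]
    rw [← cancel_mono j, Category.assoc, ← hkr, ← Category.assoc, h0, zero_comp]

theorem ext_ker_top [HasZeroMorphisms 𝒞] {G : GaloisStructure 𝒞} {K P Q : ExtObj G.E}
    (κ : K ⟶ P) (f : P ⟶ Q) (h0 : κ ≫ f = 0)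
    (hl : Nonempty (IsLimit (KernelFork.ofι κ h0))) : IsKer (ExtHom.top κ) (ExtHom.top f) := by
  have hK := IsKer.of_nonempty hl
  have := hK.mono
  refine ⟨congrArg ExtHom.top h0, ⟨fun {X} x y hxy => ?_⟩, fun {X} g hg => ?_⟩
  · let o : ExtObj G.E := ⟨X, X, 𝟙 X, G.E1 _ inferInstance⟩
    let x' : o ⟶ K := ⟨x, x ≫ K.hom, (Category.id_comp _).symm⟩
    let y' : o ⟶ K := ⟨y, y ≫ K.hom, (Category.id_comp _).symm⟩
    have : x' ≫ κ = y' ≫ κ := by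
      apply ExtHom.ext
      · exact hxy
      · change (x ≫ K.hom) ≫ κ.bot = (y ≫ K.hom) ≫ κ.bot
        have := congrArg (· ≫ P.hom) hxy
        simp only [Category.assoc] at this ⊢
        rw [← κ.w, this]
    exact congrArg ExtHom.top ((cancel_mono κ).1 this)
  · let o : ExtObj G.E := ⟨X, X, 𝟙 X, G.E1 _ inferInstance⟩
    let g' : o ⟶ P := ⟨g, g ≫ P.hom, (Category.id_comp _).symm⟩
    obtain ⟨l, hl⟩ := hK.lift g' (by
      apply ExtHom.ext
      · exact hg
      · change (g ≫ P.hom) ≫ f.bot = 0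
        rw [Category.assoc, ← f.w, ← Category.assoc, hg, zero_comp])
    exact ⟨ExtHom.top l, congrArg ExtHom.top hl⟩

theorem bot_isIso [HasZeroMorphisms 𝒞] [HasFiniteLimits 𝒞] (G : GaloisStructure 𝒞)
    (hpm : ProtomodularCat 𝒞) (h4 : AxE4 G.E) (hM : AxM G.E) {P Q : ExtObj G.E} (f : P ⟶ Q)
    (hf : IsDoubleExt f) {A : 𝒞} {k : A ⟶ P.dom} (hk : IsKer k f.top) (hk0 : k ≫ P.hom = 0) :
    IsIso f.bot := by
  have hW := IsPullback.of_hasPullback f.bot Q.hom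
  obtain ⟨c, c1, c2⟩ : ∃ c, c ≫ pullback.fst f.bot Q.hom = P.hom ∧
      c ≫ pullback.snd f.bot Q.hom = f.top :=
    ⟨hW.lift P.hom f.top f.w.symm, hW.lift_fst _ _ _, hW.lift_snd _ _ _⟩
  have hc : G.E c := hf.2.2 _ _ hW c c1 c2
  have hb := isKer_kernel f.bot
  obtain ⟨b', b1, b2, hb'⟩ := IsKer.pb_lift hW hb
  have hpb : IsPullback (0 : A ⟶ kernel f.bot) k b' c := by
    have hkm := hk.mono
    have hw : (0 : A ⟶ kernel f.bot) ≫ b' = k ≫ c := by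
      rw [zero_comp]
      apply hW.hom_ext
      · rw [Category.assoc, c1, hk0, zero_comp]
      · rw [Category.assoc, c2, hk.w, zero_comp]
    have hlift : ∀ {X : 𝒞} (x : X ⟶ kernel f.bot) (y : X ⟶ P.dom), x ≫ b' = y ≫ c →
        ∃ l : X ⟶ A, l ≫ (0 : A ⟶ kernel f.bot) = x ∧ l ≫ k = y := by
      intro X x y hxy
      obtain ⟨l, hl⟩ := hk.lift y (by
        rw [← c2, ← Category.assoc, ← hxy, Category.assoc, b2, comp_zero])
      refine ⟨l, ?_, hl⟩
      have : x ≫ kernel.ι f.bot = 0 := by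
        rw [← b1, ← Category.assoc, hxy, Category.assoc, c1, ← hl, Category.assoc, hk0, comp_zero]
      rw [comp_zero]
      rw [← cancel_mono (kernel.ι f.bot), this, zero_comp]
    choose l l1 l2 using @hlift
    exact ⟨⟨hw⟩, ⟨PullbackCone.IsLimit.mk hw (fun s => l s.fst s.snd s.condition)
      (fun s => l1 _ _ _) (fun s => l2 _ _ _)
      (fun s z h1 h2 => by rw [← cancel_mono k, h2, l2])⟩⟩
  have h0 : Epi (0 : A ⟶ kernel f.bot) := E_epi hM h4 _ (E_of_pb hpb hc)
  have hid : 𝟙 (kernel f.bot) = 0 := by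
    rw [← cancel_epi (0 : A ⟶ kernel f.bot), zero_comp, zero_comp]
  have hι : kernel.ι f.bot = 0 := by rw [← Category.id_comp (kernel.ι f.bot), hid, zero_comp]
  have hR := IsPullback.of_hasPullback f.bot f.bot
  obtain ⟨k', e1, e2, hk'⟩ := IsKer.pb_lift hR.flip hb
  have hp : pullback.fst f.bot f.bot = pullback.snd f.bot f.bot := by
    refine joint_epi hpm (s := hR.lift (𝟙 _) (𝟙 _) rfl) (hR.lift_fst _ _ _) hk' _ _ ?_ ?_
    · rw [e1, e2, hι]
    · rw [hR.lift_fst, hR.lift_snd]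
  have hmono : Mono f.bot := by
    refine ⟨fun x y hxy => ?_⟩
    have h1 := hR.lift_fst x y hxy
    have h2 := hR.lift_snd x y hxy
    exact h1.symm.trans ((congrArg (fun z => hR.lift x y hxy ≫ z) hp).trans h2)
  exact E_strong hM h4 (𝟙 _) f.bot (by rw [Category.id_comp]; exact hf.2.1)

end Helpers
open ZeroObject in
/-- let `0 → ι(A) → P → Q → 0` be a short exact sequence in `Ext_ℰ(𝒞)`
with `f : P ⟶ Q` a double `ℰ`-extension and `Q` a `Γ`-normal extension, where `ι(A)` is
the extension `A ⟶ 0`.  Then (i) applying the kernel functor yields a short exact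
sequence `0 → A → Ker P → Ker Q → 0` with `Ker f ∈ ℰ` and `Ker Q ∈ 𝒳`; and (ii) the
closure of `ι(A)` in `P` with respect to `NExt_{Γ''}(𝒞)` equals `ι` of the closure of
`A` in `Ker P` with respect to `𝒴`.  (The closure of `ι(A)` in `P` is the kernel of
`f ≫ η¹''_Q`, since `f = coker(ι(A) → P)`.) -/
theorem kernel_sequence_and_closure
    {𝒞 : Type u} [Category.{v} 𝒞] [HasZeroMorphisms 𝒞] [HasZeroObject 𝒞]
    [HasFiniteLimits 𝒞] [HasCokernels 𝒞]
    (G : GaloisStructure 𝒞) (S : SecondStructure G)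
    (hpm : ProtomodularCat 𝒞)
    (h4 : AxE4 G.E) (h5 : AxE5 G.E) (hM : AxM G.E)
    (htype1 : PreservesType1 G.E G.I)
    (hproto : ProtoadditiveOn G.inX S.Fr)
    (ND'' : Normalization G.E (fun _ _ f => S.NormalComp f))
    (A : 𝒞) (hA : G.E (0 : A ⟶ (0 : 𝒞)))
    (P Q : ExtObj G.E) (f : P ⟶ Q)
    (hf : IsDoubleExt f) (hQ : G.Normal Q.hom)
    (κ : (⟨A, 0, 0, hA⟩ : ExtObj G.E) ⟶ P) (h0 : κ ≫ f = 0)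
    (hker : Nonempty (IsLimit (KernelFork.ofι κ h0))) :
    -- the induced morphism `A ⟶ Ker P` exists, and:
    (∃ ℓ : A ⟶ kernel P.hom, ℓ ≫ kernel.ι P.hom = κ.top) ∧
    (∀ ℓ : A ⟶ kernel P.hom, ℓ ≫ kernel.ι P.hom = κ.top →
      -- (i) `0 → A → Ker P → Ker Q → 0` is short exact, `Ker f ∈ ℰ`, `Ker Q ∈ 𝒳`
      (G.E (kernel.map P.hom Q.hom f.top f.bot f.w.symm) ∧
        G.inX (kernel Q.hom) ∧
        ∃ hℓ0 : ℓ ≫ kernel.map P.hom Q.hom f.top f.bot f.w.symm = 0,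
          Nonempty (IsLimit (KernelFork.ofι ℓ hℓ0))) ∧
      -- (ii) the closure of `ι(A)` in `P` w.r.t. `NExt_{Γ''}(𝒞)`, i.e. the kernel of
      -- `f ≫ η¹''_Q` in `Ext_ℰ(𝒞)`, is `ι` applied to the closure `cl^𝒴_{Ker P}(A)`
      (∀ (Kc : ExtObj G.E) (κc : Kc ⟶ P) (hc0 : κc ≫ (f ≫ ND''.η₁.app Q) = 0),
        IsLimit (KernelFork.ofι κc hc0) →
        IsZero Kc.cod ∧
        ∃ e : Kc.dom ≅ clY S ℓ,
          e.hom ≫ (clYι S ℓ ≫ kernel.ι P.hom) = κc.top)) := by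
  have hκ := ext_ker_top κ f h0 hker
  have hκP : κ.top ≫ P.hom = 0 := by
    have := κ.w
    rw [this]; exact zero_comp
  have hbi : IsIso f.bot := bot_isIso G hpm h4 hM f hf hκ hκP
  refine ⟨⟨kernel.lift P.hom κ.top hκP, kernel.lift_ι _ _ _⟩, ?_⟩
  intro ℓ hℓ
  have hfw : f.top ≫ Q.hom = P.hom ≫ f.bot := f.w
  obtain ⟨kf, hkf⟩ : ∃ kf, kf = kernel.map P.hom Q.hom f.top f.bot f.w.symm := ⟨_, rfl⟩
  have hkfι : kf ≫ kernel.ι Q.hom = kernel.ι P.hom ≫ f.top := by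
    rw [hkf]; exact kernel.lift_ι _ _ _
  rw [← hkf]
  have hpb : IsPullback kf (kernel.ι P.hom) (kernel.ι Q.hom) f.top := by
    have hlift : ∀ {X : 𝒞} (x : X ⟶ kernel Q.hom) (y : X ⟶ P.dom),
        x ≫ kernel.ι Q.hom = y ≫ f.top →
        ∃ l : X ⟶ kernel P.hom, l ≫ kf = x ∧ l ≫ kernel.ι P.hom = y := by
      intro X x y hxy
      have hy : y ≫ P.hom = 0 := by
        rw [← cancel_mono f.bot, Category.assoc, ← hfw, ← Category.assoc, ← hxy, Category.assoc,
          kernel.condition, comp_zero, zero_comp]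
      refine ⟨kernel.lift _ y hy, ?_, kernel.lift_ι _ _ _⟩
      rw [← cancel_mono (kernel.ι Q.hom), Category.assoc, hkfι, ← Category.assoc, kernel.lift_ι,
        hxy]
    choose l l1 l2 using @hlift
    exact ⟨⟨hkfι⟩, ⟨PullbackCone.IsLimit.mk hkfι (fun s => l s.fst s.snd s.condition)
      (fun s => l1 _ _ _) (fun s => l2 _ _ _)
      (fun s z h1 h2 => by rw [← cancel_mono (kernel.ι P.hom), h2, l2])⟩⟩
  have hkfE : G.E kf := E_of_pb hpb hf.1
  have hKQ : G.inX (kernel Q.hom) := normal_ker (isKer_kernel Q.hom) hQ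
  have hℓk : IsKer ℓ kf := by
    have := hκ.mono
    refine ⟨?_, ?_, fun g hg => ?_⟩
    · rw [← cancel_mono (kernel.ι Q.hom), Category.assoc, hkfι, ← Category.assoc, hℓ, zero_comp]
      exact hκ.w
    · rw [← hℓ] at this; exact mono_of_mono ℓ (kernel.ι P.hom)
    · obtain ⟨l, hl⟩ := hκ.lift (g ≫ kernel.ι P.hom) (by
        rw [Category.assoc, ← hkfι, ← Category.assoc, hg, zero_comp])
      refine ⟨l, ?_⟩
      rw [← cancel_mono (kernel.ι P.hom), Category.assoc, hℓ]
      exact hl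
  refine ⟨⟨hkfE, hKQ, hℓk.w, hℓk.nonempty⟩, ?_⟩
  intro Kc κc hc0 hlim
  have hκc := ext_ker_top κc (f ≫ ND''.η₁.app Q) hc0 ⟨hlim⟩
  have hmono : Mono κc := (IsKer.of_nonempty ⟨hlim⟩ : IsKer κc (f ≫ ND''.η₁.app Q)).mono
  obtain ⟨u, hu⟩ : ∃ u : Q ⟶ ND''.I₁.obj Q, u = ND''.η₁.app Q := ⟨_, rfl⟩
  have hui : IsIso u.bot := by rw [hu]; exact ND''.bot_iso Q
  have hκc' : IsKer κc.top (f.top ≫ u.top) := by rw [hu]; exact hκc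
  have huw : u.top ≫ (ND''.I₁.obj Q).hom = Q.hom ≫ u.bot := u.w
  have hP0 : ∀ {X : 𝒞} (g : X ⟶ P.dom), g ≫ f.top ≫ u.top = 0 → g ≫ P.hom = 0 := by
    intro X g hg
    rw [← cancel_mono f.bot, Category.assoc, ← hfw, ← cancel_mono u.bot]
    simp only [Category.assoc, zero_comp]
    rw [← huw]
    have := congrArg (· ≫ (ND''.I₁.obj Q).hom) hg
    simpa using this
  constructor
  · have hz : κc.top ≫ P.hom = 0 := hP0 _ hκc'.w
    have hE0 : G.E (0 : Kc.dom ⟶ (0 : 𝒞)) := E_of_split h4 _ 0 (by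
      apply (isZero_zero 𝒞).eq_of_src)
    let K' : ExtObj G.E := ⟨Kc.dom, 0, 0, hE0⟩
    let κ' : K' ⟶ P := ⟨κc.top, 0, by rw [hz]; exact zero_comp.symm⟩
    obtain ⟨l, hl⟩ := (IsKer.of_nonempty ⟨hlim⟩ : IsKer κc (f ≫ ND''.η₁.app Q)).lift κ' (by
      apply ExtHom.ext
      · exact hκc.w
      · exact zero_comp)
    have hm := hκc.mono
    have hl1 : l.top = 𝟙 Kc.dom := by
      rw [← cancel_mono κc.top, Category.id_comp]
      exact congrArg ExtHom.top hl
    have hh : Kc.hom = 0 := by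
      have := l.w
      rw [hl1] at this
      exact (Category.id_comp _).symm.trans (this.trans zero_comp)
    have hepi : Epi Kc.hom := E_epi hM h4 _ Kc.mem
    rw [IsZero.iff_id_eq_zero, ← cancel_epi Kc.hom, hh, zero_comp, zero_comp]
  · have hclk : IsKer (clYι S ℓ ≫ kernel.ι P.hom) (f.top ≫ u.top) := by
      obtain ⟨M, m, q, hqm, hmN, hq⟩ := exists_normal_quotient G S hpm h4 h5 hM htype1 hproto
        (isKer_kernel Q.hom) hQ
      let Mo : ExtObj G.E := ⟨M, Q.cod, m, hmN.1⟩
      obtain ⟨ψ, hψ, -⟩ := ND''.refl_univ Q Mo hmN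
        (⟨q, 𝟙 _, hqm.trans (Category.comp_id _).symm⟩ : Q ⟶ Mo)
      have hψt : u.top ≫ ψ.top = q := by
        rw [hu]; exact congrArg ExtHom.top hψ
      obtain ⟨h, hh⟩ := E_normal_epi hpm hM h4 hkfE hℓk (cokernel.π ℓ) (cokernel.condition ℓ)
      have hd : cokernel.π ℓ ≫ cokernel.desc ℓ kf hℓk.w = kf := cokernel.π_desc _ _ _
      obtain ⟨d, hdd⟩ : ∃ d, d = cokernel.desc ℓ kf hℓk.w := ⟨_, rfl⟩
      rw [← hdd] at hd
      have hcl : clYι S ℓ ≫ cokernel.π ℓ ≫ S.unit (cokernel ℓ) = 0 := kernel.condition _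
      have hclK : IsKer (clYι S ℓ) (cokernel.π ℓ ≫ S.unit (cokernel ℓ)) :=
        isKer_kernel (cokernel.π ℓ ≫ S.unit (cokernel ℓ))
      have hclm := hclK.mono
      have hunit : S.unit (kernel Q.hom) =
          S.θ.app (kernel Q.hom) ≫ S.Fr.map (G.η.app (kernel Q.hom)) :=
        S.θ.naturality (G.η.app (kernel Q.hom))
      refine ⟨?_, mono_comp _ _, fun {X} g hg => ?_⟩
      · obtain ⟨n, hn⟩ : ∃ n : kernel Q.hom ⟶ kernel (ND''.I₁.obj Q).hom,
            n ≫ kernel.ι (ND''.I₁.obj Q).hom = kernel.ι Q.hom ≫ u.top :=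
          ⟨kernel.lift _ (kernel.ι Q.hom ≫ u.top) (by
            rw [Category.assoc, huw, ← Category.assoc, kernel.condition, zero_comp]),
            kernel.lift_ι _ _ _⟩
        obtain ⟨n', hn', -⟩ := unit_univ S
          (normalComp_ker S (isKer_kernel _) (ND''.mem Q)) n
        have e1 : clYι S ℓ ≫ kf ≫ S.unit (kernel Q.hom) = 0 := by
          rw [← hd, Category.assoc, unit_nat, ← Category.assoc (cokernel.π ℓ),
            ← Category.assoc (clYι S ℓ), hcl, zero_comp]
        have e2 : clYι S ℓ ≫ kf ≫ n = 0 := by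
          have := congrArg (fun z => z ≫ n') e1
          simp only [Category.assoc, zero_comp] at this
          rw [← hn']; exact this
        calc (clYι S ℓ ≫ kernel.ι P.hom) ≫ f.top ≫ u.top
            = clYι S ℓ ≫ (kernel.ι P.hom ≫ f.top) ≫ u.top := by simp only [Category.assoc]
          _ = (clYι S ℓ ≫ kf ≫ n) ≫ kernel.ι (ND''.I₁.obj Q).hom := by
              rw [← hkfι]; simp only [Category.assoc]; rw [hn]
          _ = 0 := by rw [e2, zero_comp]
      · obtain ⟨g', hg'⟩ : ∃ g', g' ≫ kernel.ι P.hom = g :=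
          ⟨kernel.lift _ g (hP0 g hg), kernel.lift_ι _ _ _⟩
        have e1 : (g' ≫ kf) ≫ kernel.ι Q.hom ≫ q = 0 := by
          calc (g' ≫ kf) ≫ kernel.ι Q.hom ≫ q
              = g' ≫ (kf ≫ kernel.ι Q.hom) ≫ q := by simp only [Category.assoc]
            _ = (g ≫ f.top ≫ u.top) ≫ ψ.top := by
                rw [hkfι, ← hg', ← hψt]; simp only [Category.assoc]
            _ = 0 := by rw [hg, zero_comp]
        have e2 : g' ≫ kf ≫ S.unit (kernel Q.hom) = 0 := by
          rw [hunit, ← Category.assoc, ← Category.assoc]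
          exact (congrArg (fun z => z ≫ _) (hq _ e1)).trans zero_comp
        have e3 : g' ≫ cokernel.π ℓ ≫ S.unit (cokernel ℓ) = 0 := by
          rw [← hh, Category.assoc, unit_nat, ← Category.assoc kf, ← Category.assoc g', e2,
            zero_comp]
        obtain ⟨l, hl⟩ := hclK.lift g' e3
        exact ⟨l, by rw [← Category.assoc, hl, hg']⟩
    obtain ⟨φ, hφi, hφ⟩ := hκc'.unique hclk
    exact ⟨asIso φ, hφ⟩
end
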